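/- arXiv:2409.10804 — 4 statements merged into one kernel-verified Lean document; each statement's English description precedes it below -/
import Mathlib

section
/- Let α ∈ (1,2). There exists a constant C > 0, depending only on α and on the fixed Littlewood–Paley bump function, such that for all t > 0, all k ∈ ℤ and all f ∈ L¹(ℝ³), one has ‖e^{-itD^α} P_k f‖_{L^∞(ℝ³)} ≤ C · t^{-3/2} · 2^{3(1-α/2)k} · ‖f‖_{L¹(ℝ³)}. -/
/-!
By Fubini, `propPk φ₀ α t k f` is the convolution of `f` with
`K(x) = ∫ exp(i(x·ξ - t|ξ|^α)) ψ_k(ξ) dξ` up to a constant (`propPk_eq`), so the claim is a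
uniform bound on `K`. Scaling by `2^k` reduces it to `k = 0` with time `s = t 2^{αk}`
(`kernel_bound`), where `|K(x)| ≤ C s^{-3/2}` is needed uniformly in `x` (`kernel_unit`).

Slicing `ℝ³` by planes orthogonal to `x` and using polar coordinates in each plane (`polar`) gives
`K(x) = κ ∫ r g(r) ∫_{-r}^{r} exp(i|x|z) dz dr`, with `g(r) = exp(-i s r^α) ψ(r)` and
`κ` a constant. This leaves one-dimensional integrals with phase `u r - s r^α` and
frequency `u` in `[-|x|, |x|]`.

* Since `α(α-1) r^{α-2}` is bounded below on the support of `ψ`, van der Corput's lemma bounds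
  such integrals by `C s^{-1/2}`, uniformly in `u` (`vdc`).
* If `|x| ≤ s/8`, the derivative of the phase has size at least `s/8`; one integration by parts
  gains `1/s`, and van der Corput applied to the result gives `C s^{-3/2}` (`nonstat`).
* If `|x| > s/8`, the integral in `z` is explicit and contributes the factor `1/|x| ≤ 8/s`, while
  van der Corput at the frequencies `±|x|` gives the remaining `s^{-1/2}`.

Van der Corput's lemma is proved by a regularised integration by parts. With `p` the derivative
of the phase divided by `s`, write `1 = 1/(1 + s p²) + s p · p/(1 + s p²)`. The factor `s p` in the
second term is the derivative of the phase, hence integrates by parts against the weight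
`p/(1 + s p²)`, which is at most `s^{-1/2}`. The terms in which the amplitude is not
differentiated are controlled by the integral of
`|p'|/(1 + s p²)`, which is at most `π s^{-1/2}` because it is an increment of `arctan`. No case
distinction on the location of the stationary point is needed.
-/

open MeasureTheory Real
open scoped ENNReal RealInnerProductSpace

noncomputable section

abbrev R3 := EuclideanSpace ℝ (Fin 3)

/-- The Fourier transform `f̂(ξ) = (2π)^{-3/2} ∫ e^{-i x·ξ} f(x) dx`. -/
def ft (f : R3 → ℂ) (ξ : R3) : ℂ :=
  (((2 * π) ^ (-(3 : ℝ) / 2) : ℝ) : ℂ) *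
    ∫ x : R3, Complex.exp (-Complex.I * ((⟪x, ξ⟫ : ℝ) : ℂ)) * f x

/-- A fixed Littlewood–Paley bump function: real-valued, nonnegative, even, radially
decreasing, smooth, supported in `[-5/4, 5/4]` and `≡ 1` on `[-1,1]`. -/
structure IsLPBump (φ₀ : ℝ → ℝ) : Prop where
  smooth : ContDiff ℝ (⊤ : ℕ∞) φ₀
  supp : ∀ r : ℝ, (5 : ℝ) / 4 < |r| → φ₀ r = 0
  even : ∀ r : ℝ, φ₀ (-r) = φ₀ r
  nonneg : ∀ r : ℝ, 0 ≤ φ₀ r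
  radDecr : ∀ a b : ℝ, 0 ≤ a → a ≤ b → φ₀ b ≤ φ₀ a
  one : ∀ r : ℝ, |r| ≤ 1 → φ₀ r = 1

/-- The Littlewood–Paley cutoff `ψ_k(ξ) = ψ(2^{-k}|ξ|)` with `ψ(r) = φ₀(r) − φ₀(2r)`. -/
def psiK (φ₀ : ℝ → ℝ) (k : ℤ) (ξ : R3) : ℝ :=
  φ₀ ((2 : ℝ) ^ (-k) * ‖ξ‖) - φ₀ ((2 : ℝ) ^ (1 - k) * ‖ξ‖)

/-- `e^{-itD^α} P_k f`, realized by the Fourier inversion formula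
`x ↦ (2π)^{-3/2} ∫ e^{i(x·ξ − t|ξ|^α)} ψ_k(ξ) f̂(ξ) dξ`, so that its Fourier transform
is `e^{-it|ξ|^α} ψ_k(ξ) f̂(ξ)`. -/
def propPk (φ₀ : ℝ → ℝ) (α t : ℝ) (k : ℤ) (f : R3 → ℂ) (x : R3) : ℂ :=
  (((2 * π) ^ (-(3 : ℝ) / 2) : ℝ) : ℂ) *
    ∫ ξ : R3, Complex.exp (Complex.I * (((⟪x, ξ⟫ : ℝ) : ℂ) - (t : ℂ) * ((‖ξ‖ ^ α : ℝ) : ℂ))) *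
      ((psiK φ₀ k ξ : ℝ) : ℂ) * ft f ξ

/-! ### One-dimensional oscillatory integrals -/

/-- The oscillating factor `exp(i(u r - s r^α))`, with frequency `u` and time `s`. -/
def phs (α u s r : ℝ) : ℂ := Complex.exp (Complex.I * ((u * r - s * r ^ α : ℝ) : ℂ))

lemma norm_phs (α u s r : ℝ) : ‖phs α u s r‖ = 1 := by
  rw [phs, mul_comm, Complex.norm_exp_ofReal_mul_I]

/-- The derivative of `u r - s r^α` divided by `s`, where `v` stands for `u / s`. -/
def phSlope (α v r : ℝ) : ℝ := v - α * r ^ (α - 1)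
/-- The derivative of `phSlope α v` in `r`, which does not depend on `v`. -/
def phSlope' (α r : ℝ) : ℝ := -(α * (α - 1) * r ^ (α - 2))
/-- The second derivative of `phSlope α v` in `r`. -/
def phSlope'' (α r : ℝ) : ℝ := -(α * (α - 1) * ((α - 2) * r ^ (α - 3)))

lemma hasDerivAt_phSlope {α r : ℝ} (v : ℝ) (hr : 0 < r) :
    HasDerivAt (phSlope α v) (phSlope' α r) r := by
  have h := ((Real.hasDerivAt_rpow_const (p := α - 1) (Or.inl hr.ne')).const_mul α).const_sub v
  refine HasDerivAt.congr_deriv (f := phSlope α v) h ?_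
  rw [phSlope', show α - 1 - 1 = α - 2 by ring]; ring

lemma hasDerivAt_phSlope' {α r : ℝ} (hr : 0 < r) :
    HasDerivAt (phSlope' α) (phSlope'' α r) r := by
  have h := ((Real.hasDerivAt_rpow_const (p := α - 2) (Or.inl hr.ne')).const_mul (α * (α - 1))).neg
  refine HasDerivAt.congr_deriv (f := phSlope' α) h ?_
  rw [phSlope'', show α - 2 - 1 = α - 3 by ring]

lemma hasDerivAt_phs {α u s r : ℝ} (hs : s ≠ 0) (hr : 0 < r) :
    HasDerivAt (phs α u s) (Complex.I * ((s * phSlope α (u / s) r : ℝ) : ℂ) * phs α u s r) r := by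
  have h1 : HasDerivAt (fun r : ℝ => u * r - s * r ^ α) (s * phSlope α (u / s) r) r := by
    have h := ((hasDerivAt_id r).const_mul u).sub
      ((Real.hasDerivAt_rpow_const (p := α) (Or.inl hr.ne')).const_mul s)
    refine HasDerivAt.congr_deriv (f := fun r : ℝ => u * r - s * r ^ α) h ?_
    rw [phSlope]; field_simp
  have h2 := ((h1.ofReal_comp).const_mul Complex.I).cexp
  refine HasDerivAt.congr_deriv (f := phs α u s) h2 ?_
  rw [phs]; ring

lemma continuousOn_phSlope'' (α : ℝ) : ContinuousOn (phSlope'' α) (Set.Icc (1 / 4) 2) := by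
  intro r hr
  have : r ≠ 0 := by have := hr.1; positivity
  have h := (Real.continuousAt_rpow_const r (α - 3) (Or.inl this))
  unfold phSlope''
  fun_prop

/-- The weight of the regularised integration by parts is bounded by `s^{-1/2}`. -/
lemma slope_mul_le {s p : ℝ} (hs : 0 < s) : |p / (1 + s * p ^ 2)| ≤ (√s)⁻¹ := by
  have h0 : 0 < √s := Real.sqrt_pos.2 hs
  have h1 : √s ^ 2 = s := Real.sq_sqrt hs.le
  rw [abs_div, abs_of_pos (show 0 < 1 + s * p ^ 2 by positivity), div_le_iff₀ (by positivity),
    inv_mul_eq_div, le_div_iff₀ h0, ← sq_abs p]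
  nlinarith [sq_nonneg (√s * |p| - 1)]

/-- Van der Corput's second derivative estimate on `[1/4, 2]`, uniform in the frequency `u`. The
amplitude vanishes at the endpoints, so there are no boundary terms. -/
lemma vdc {α : ℝ} (hα : α ∈ Set.Ioo (1 : ℝ) 2) : ∃ C : ℝ, 0 < C ∧ ∀ (s u M : ℝ) (a a' : ℝ → ℝ),
    0 < s → (∀ r ∈ Set.Icc (1 / 4 : ℝ) 2, HasDerivAt a (a' r) r) →
    ContinuousOn a' (Set.Icc (1 / 4) 2) → a (1 / 4) = 0 → a 2 = 0 →
    (∀ r ∈ Set.Icc (1 / 4 : ℝ) 2, |a r| ≤ M) → (∀ r ∈ Set.Icc (1 / 4 : ℝ) 2, |a' r| ≤ M) →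
    ‖∫ r in (1 / 4 : ℝ)..2, phs α u s r * (a r : ℂ)‖ ≤ C * M * (√s)⁻¹ := by
  obtain ⟨h1, h2⟩ := hα
  set c : ℝ := α * (α - 1) / 2 with hc
  have hc0 : 0 < c := by have : 0 < α - 1 := by linarith
                         positivity
  refine ⟨π / c + π + 2, by positivity, ?_⟩
  intro s u M a a' hs ha ha' ha0 ha2 hM hM'
  have huI : Set.uIcc (1 / 4 : ℝ) 2 = Set.Icc (1 / 4) 2 := Set.uIcc_of_le (by norm_num)
  have hpos : ∀ r ∈ Set.Icc (1 / 4 : ℝ) 2, 0 < r := fun r hr => by linarith [hr.1]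
  have hM0 : 0 ≤ M := (abs_nonneg _).trans (hM 2 ⟨by norm_num, le_rfl⟩)
  have hsq : 0 < √s := Real.sqrt_pos.2 hs
  set p : ℝ → ℝ := phSlope α (u / s) with hp
  set p' : ℝ → ℝ := phSlope' α with hp'
  have hdp : ∀ r ∈ Set.Icc (1 / 4 : ℝ) 2, HasDerivAt p (p' r) r :=
    fun r hr => hasDerivAt_phSlope _ (hpos r hr)
  have hcp : ContinuousOn p (Set.Icc (1 / 4) 2) := fun r hr =>
    (hdp r hr).continuousAt.continuousWithinAt
  have hcp' : ContinuousOn p' (Set.Icc (1 / 4) 2) := fun r hr =>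
    (hasDerivAt_phSlope' (hpos r hr)).continuousAt.continuousWithinAt
  have hca : ContinuousOn a (Set.Icc (1 / 4) 2) := fun r hr =>
    (ha r hr).continuousAt.continuousWithinAt
  have hcE : ContinuousOn (phs α u s) (Set.Icc (1 / 4) 2) := fun r hr =>
    (hasDerivAt_phs hs.ne' (hpos r hr)).continuousAt.continuousWithinAt
  have hp'c : ∀ r ∈ Set.Icc (1 / 4 : ℝ) 2, c ≤ - p' r := by
    intro r hr
    have h3 : (2:ℝ)⁻¹ ≤ r ^ (α - 2) := by
      calc (2:ℝ)⁻¹ = 2 ^ (-1 : ℝ) := by rw [Real.rpow_neg_one]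
        _ ≤ 2 ^ (α - 2) := Real.rpow_le_rpow_of_exponent_le (by norm_num) (by linarith)
        _ ≤ r ^ (α - 2) := Real.rpow_le_rpow_of_nonpos (hpos r hr) hr.2 (by linarith)
    have h4 : 0 ≤ α * (α - 1) := by linarith
    rw [hp', phSlope', hc, neg_neg]
    nlinarith
  have hden : ∀ r, 0 < 1 + s * p r ^ 2 := fun r => by positivity
  set w : ℝ → ℝ := fun r => p r / (1 + s * p r ^ 2) with hw
  set w' : ℝ → ℝ := fun r => p' r * (1 - s * p r ^ 2) / (1 + s * p r ^ 2) ^ 2 with hw'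
  have hdw : ∀ r ∈ Set.Icc (1 / 4 : ℝ) 2, HasDerivAt w (w' r) r := by
    intro r hr
    have h := (hdp r hr).div ((((hdp r hr).pow 2).const_mul s).const_add 1) (hden r).ne'
    refine HasDerivAt.congr_deriv (f := w) h ?_
    simp only [hw']
    congr 1
    simp
    ring
  have hcw : ContinuousOn w (Set.Icc (1 / 4) 2) := fun r hr =>
    (hdw r hr).continuousAt.continuousWithinAt
  have hcw' : ContinuousOn w' (Set.Icc (1 / 4) 2) := by
    refine ContinuousOn.div (by fun_prop) (by fun_prop) fun r _ => by have := hden r; positivity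
  -- the total mass of `-p' / (1 + s p²)` is an increment of `arctan`
  have hcm : ContinuousOn (fun r => (- p' r) / (1 + s * p r ^ 2)) (Set.Icc (1 / 4) 2) :=
    ContinuousOn.div (by fun_prop) (by fun_prop) fun r _ => (hden r).ne'
  have hmass : ∫ r in (1 / 4 : ℝ)..2, (- p' r) / (1 + s * p r ^ 2) ≤ π * (√s)⁻¹ := by
    have hd : ∀ r ∈ Set.uIcc (1 / 4 : ℝ) 2,
        HasDerivAt (fun r => -((√s)⁻¹ * Real.arctan (√s * p r)))
          ((- p' r) / (1 + s * p r ^ 2)) r := by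
      intro r hr
      rw [huI] at hr
      have h := ((((hdp r hr).const_mul (√s)).arctan).const_mul ((√s)⁻¹)).neg
      refine HasDerivAt.congr_deriv
        (f := fun r => -((√s)⁻¹ * Real.arctan (√s * p r))) h ?_
      rw [mul_pow, Real.sq_sqrt hs.le]
      have := hden r
      field_simp
    rw [intervalIntegral.integral_eq_sub_of_hasDerivAt hd
      ((huI ▸ hcm).intervalIntegrable)]
    have e1 := Real.arctan_lt_pi_div_two (√s * p (1 / 4))
    have e2 := Real.neg_pi_div_two_lt_arctan (√s * p 2)
    have : 0 < (√s)⁻¹ := by positivity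
    nlinarith
  have hI : ∀ {E : Type} [NormedAddCommGroup E] [NormedSpace ℝ E] {f : ℝ → E},
      ContinuousOn f (Set.Icc (1 / 4) 2) → IntervalIntegrable f volume (1 / 4) 2 := by
    intro E _ _ f hf
    exact (huI.symm ▸ hf : ContinuousOn f (Set.uIcc (1 / 4) 2)).intervalIntegrable
  -- split `1 = 1 / (1 + s p²) + s p w`
  have hsplit : ∫ r in (1 / 4 : ℝ)..2, phs α u s r * (a r : ℂ) =
      (∫ r in (1 / 4 : ℝ)..2, phs α u s r * ((a r / (1 + s * p r ^ 2) : ℝ) : ℂ)) +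
      ∫ r in (1 / 4 : ℝ)..2, (-Complex.I) * (((w r * a r : ℝ) : ℂ) *
        (Complex.I * ((s * p r : ℝ) : ℂ) * phs α u s r)) := by
    rw [← intervalIntegral.integral_add]
    · apply intervalIntegral.integral_congr
      intro r _
      have h3 : a r = a r / (1 + s * p r ^ 2) + s * p r * (w r * a r) := by
        have := (hden r).ne'
        simp only [hw]; field_simp
      have h4 : (a r : ℂ) = ((a r / (1 + s * p r ^ 2) : ℝ) : ℂ) +
          ((s * p r : ℝ) : ℂ) * ((w r * a r : ℝ) : ℂ) := by exact_mod_cast h3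
      simp only
      rw [h4]
      linear_combination (phs α u s r * ((s * p r : ℝ) : ℂ) * ((w r * a r : ℝ) : ℂ)) * Complex.I_sq
    · apply hI
      refine hcE.mul (Complex.continuous_ofReal.comp_continuousOn ?_)
      exact ContinuousOn.div (by fun_prop) (by fun_prop) fun r _ => (hden r).ne'
    · apply hI
      refine continuousOn_const.mul ((Complex.continuous_ofReal.comp_continuousOn (by fun_prop)).mul
        ((continuousOn_const.mul (Complex.continuous_ofReal.comp_continuousOn (by fun_prop))).mul hcE))
  have hibp : ∫ r in (1 / 4 : ℝ)..2, ((w r * a r : ℝ) : ℂ) *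
        (Complex.I * ((s * p r : ℝ) : ℂ) * phs α u s r) =
      - ∫ r in (1 / 4 : ℝ)..2, ((w' r * a r + w r * a' r : ℝ) : ℂ) * phs α u s r := by
    rw [intervalIntegral.integral_mul_deriv_eq_deriv_mul
      (u' := fun r => ((w' r * a r + w r * a' r : ℝ) : ℂ)) (v := phs α u s)]
    · simp only [ha0, ha2, mul_zero, Complex.ofReal_zero, zero_mul, sub_zero, zero_sub]
    · intro r hr
      rw [huI] at hr
      exact ((hdw r hr).mul (ha r hr)).ofReal_comp
    · intro r hr
      rw [huI] at hr
      exact hasDerivAt_phs hs.ne' (hpos r hr)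
    · exact hI (Complex.continuous_ofReal.comp_continuousOn (by fun_prop))
    · exact hI ((continuousOn_const.mul
        (Complex.continuous_ofReal.comp_continuousOn (by fun_prop))).mul hcE)
  have hb1 : ‖∫ r in (1 / 4 : ℝ)..2, phs α u s r * ((a r / (1 + s * p r ^ 2) : ℝ) : ℂ)‖ ≤
      M / c * (π * (√s)⁻¹) := by
    calc _ ≤ ∫ r in (1 / 4 : ℝ)..2, M / c * ((- p' r) / (1 + s * p r ^ 2)) := by
          refine intervalIntegral.norm_integral_le_of_norm_le (by norm_num) ?_
            (hI (continuousOn_const.mul hcm))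
          refine Filter.Eventually.of_forall fun r hr => ?_
          have hr' : r ∈ Set.Icc (1 / 4 : ℝ) 2 := ⟨hr.1.le, hr.2⟩
          rw [norm_mul, norm_phs, one_mul, Complex.norm_real, Real.norm_eq_abs, abs_div,
            abs_of_pos (hden r), ← mul_div_assoc]
          refine div_le_div_of_nonneg_right ?_ (hden r).le
          calc |a r| ≤ M := hM r hr'
            _ = M / c * c := by field_simp
            _ ≤ _ := by gcongr; exact hp'c r hr'
      _ ≤ _ := by
          rw [intervalIntegral.integral_const_mul]
          gcongr
  have hb2 : ‖∫ r in (1 / 4 : ℝ)..2, ((w' r * a r + w r * a' r : ℝ) : ℂ) * phs α u s r‖ ≤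
      M * (π * (√s)⁻¹) + 2 * (M * (√s)⁻¹) := by
    calc _ ≤ ∫ r in (1 / 4 : ℝ)..2, (M * ((- p' r) / (1 + s * p r ^ 2)) + M * (√s)⁻¹) := by
          refine intervalIntegral.norm_integral_le_of_norm_le (by norm_num) ?_
            (hI ((continuousOn_const.mul hcm).add continuousOn_const))
          refine Filter.Eventually.of_forall fun r hr => ?_
          have hr' : r ∈ Set.Icc (1 / 4 : ℝ) 2 := ⟨hr.1.le, hr.2⟩
          rw [norm_mul, norm_phs, mul_one, Complex.norm_real, Real.norm_eq_abs]
          refine (abs_add_le _ _).trans (add_le_add ?_ ?_)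
          · rw [abs_mul, mul_comm]
            refine mul_le_mul (hM r hr') ?_ (abs_nonneg _) hM0
            have hd := hden r
            have hq : |1 - s * p r ^ 2| ≤ 1 + s * p r ^ 2 := by
              have : 0 ≤ s * p r ^ 2 := by positivity
              rw [abs_le]; constructor <;> linarith
            simp only [hw']
            rw [abs_div, abs_mul, abs_of_neg (show p' r < 0 by linarith [hp'c r hr']),
              abs_of_pos (pow_pos hd 2), div_le_div_iff₀ (by positivity) hd]
            have : 0 ≤ -p' r := by linarith [hp'c r hr']
            calc _ ≤ -p' r * (1 + s * p r ^ 2) * (1 + s * p r ^ 2) := by gcongr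
              _ = _ := by ring
          · rw [abs_mul, mul_comm]
            exact mul_le_mul (hM' r hr') (slope_mul_le hs) (abs_nonneg _) hM0
      _ ≤ _ := by
          rw [intervalIntegral.integral_add (f := fun r => M * (- p' r / (1 + s * p r ^ 2)))
            (hI (continuousOn_const.mul hcm)) (hI continuousOn_const), intervalIntegral.integral_const_mul,
            intervalIntegral.integral_const]
          refine add_le_add (by gcongr) ?_
          rw [smul_eq_mul]
          have : 0 ≤ M * (√s)⁻¹ := by positivity
          gcongr
          norm_num
  rw [hsplit, intervalIntegral.integral_const_mul, hibp]
  refine (norm_add_le _ _).trans ?_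
  rw [norm_mul, norm_neg, norm_neg, Complex.norm_I, one_mul]
  calc _ ≤ _ := add_le_add hb1 hb2
    _ = _ := by ring

/-- When `|u| ≤ s/8` the phase has no stationary point in `[1/4, 2]`: one integration by parts gains
a factor `1/s`, and `vdc` applied to the new amplitude gives a further `s^{-1/2}`. -/
lemma nonstat {α : ℝ} (hα : α ∈ Set.Ioo (1 : ℝ) 2) {M : ℝ} {a a' a'' : ℝ → ℝ}
    (ha : ∀ r ∈ Set.Icc (1 / 4 : ℝ) 2, HasDerivAt a (a' r) r)
    (ha' : ∀ r ∈ Set.Icc (1 / 4 : ℝ) 2, HasDerivAt a' (a'' r) r)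
    (ha'' : ContinuousOn a'' (Set.Icc (1 / 4) 2))
    (h0 : a (1 / 4) = 0) (h2 : a 2 = 0) (h0' : a' (1 / 4) = 0) (h2' : a' 2 = 0)
    (hM : ∀ r ∈ Set.Icc (1 / 4 : ℝ) 2, |a r| ≤ M) (hM' : ∀ r ∈ Set.Icc (1 / 4 : ℝ) 2, |a' r| ≤ M)
    (hM'' : ∀ r ∈ Set.Icc (1 / 4 : ℝ) 2, |a'' r| ≤ M) :
    ∃ C : ℝ, 0 < C ∧ ∀ (s u : ℝ), 0 < s → |u| ≤ s / 8 →
      ‖∫ r in (1 / 4 : ℝ)..2, phs α u s r * (a r : ℂ)‖ ≤ C * (s⁻¹ * (√s)⁻¹) := by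
  have huI : Set.uIcc (1 / 4 : ℝ) 2 = Set.Icc (1 / 4) 2 := Set.uIcc_of_le (by norm_num)
  have hpos : ∀ r ∈ Set.Icc (1 / 4 : ℝ) 2, 0 < r := fun r hr => by linarith [hr.1]
  have hM0 : 0 ≤ M := (abs_nonneg _).trans (hM 2 ⟨by norm_num, le_rfl⟩)
  have hcs' : ContinuousOn (phSlope' α) (Set.Icc (1 / 4) 2) := fun r hr =>
    (hasDerivAt_phSlope' (hpos r hr)).continuousAt.continuousWithinAt
  obtain ⟨P1, hP1⟩ := isCompact_Icc.exists_bound_of_continuousOn hcs'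
  obtain ⟨P2, hP2⟩ := isCompact_Icc.exists_bound_of_continuousOn (continuousOn_phSlope'' α)
  obtain ⟨C, hC, hvdc⟩ := vdc hα
  have hP10 : 0 ≤ P1 := (norm_nonneg _).trans (hP1 2 ⟨by norm_num, le_rfl⟩)
  have hP20 : 0 ≤ P2 := (norm_nonneg _).trans (hP2 2 ⟨by norm_num, le_rfl⟩)
  -- a common bound for the new amplitude `b` and its derivative, using `|1/p| ≤ 8`
  set N : ℝ := 8 * M + 64 * (2 * (M * P1) + M * P2) + 64 * (M * P1) + 1024 * (M * P1 ^ 2) + 1 with hN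
  have hN0 : 0 < N := by positivity
  refine ⟨C * N, by positivity, ?_⟩
  intro s u hs hu
  set p : ℝ → ℝ := phSlope α (u / s) with hp
  set p' : ℝ → ℝ := phSlope' α with hp'
  set p'' : ℝ → ℝ := phSlope'' α with hp''
  have hdp : ∀ r ∈ Set.Icc (1 / 4 : ℝ) 2, HasDerivAt p (p' r) r :=
    fun r hr => hasDerivAt_phSlope _ (hpos r hr)
  have hdp' : ∀ r ∈ Set.Icc (1 / 4 : ℝ) 2, HasDerivAt p' (p'' r) r :=
    fun r hr => hasDerivAt_phSlope' (hpos r hr)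
  have hplow : ∀ r ∈ Set.Icc (1 / 4 : ℝ) 2, 1 / 8 ≤ |p r| := by
    intro r hr
    have h3 : (1 / 4 : ℝ) ≤ r ^ (α - 1) := by
      calc (1 / 4 : ℝ) = (1 / 4) ^ (1 : ℝ) := by rw [Real.rpow_one]
        _ ≤ (1 / 4) ^ (α - 1) :=
          Real.rpow_le_rpow_of_exponent_ge (by norm_num) (by norm_num) (by linarith [hα.2])
        _ ≤ r ^ (α - 1) := Real.rpow_le_rpow (by norm_num) hr.1 (by linarith [hα.1])
    have h4 : u / s ≤ 1 / 8 := by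
      rw [div_le_iff₀ hs]; linarith [le_abs_self u]
    rw [le_abs]; right
    rw [hp, phSlope]
    nlinarith [hα.1]
  have hp0 : ∀ r ∈ Set.Icc (1 / 4 : ℝ) 2, p r ≠ 0 := fun r hr h => by
    have := hplow r hr; rw [h] at this; norm_num at this
  have hinv : ∀ r ∈ Set.Icc (1 / 4 : ℝ) 2, |(p r)⁻¹| ≤ 8 := fun r hr => by
    rw [abs_inv]
    calc |p r|⁻¹ ≤ (1 / 8)⁻¹ := inv_anti₀ (by norm_num) (hplow r hr)
      _ = 8 := by norm_num
  set q : ℝ → ℝ := fun r => (p r)⁻¹ with hq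
  -- the amplitude after integration by parts, `(a / p)'`, and its derivative
  set b : ℝ → ℝ := fun r => a' r * q r - a r * p' r * q r ^ 2 with hb
  set b' : ℝ → ℝ := fun r => a'' r * q r - (2 * (a' r * p' r) + a r * p'' r) * q r ^ 2
    + 2 * (a r * p' r ^ 2) * q r ^ 3 with hb'
  have hdq : ∀ r ∈ Set.Icc (1 / 4 : ℝ) 2, HasDerivAt q (-p' r * q r ^ 2) r := fun r hr => by
    have h := (hdp r hr).inv (hp0 r hr)
    refine HasDerivAt.congr_deriv (f := q) h ?_
    simp only [hq]; field_simp
  have hdaq : ∀ r ∈ Set.Icc (1 / 4 : ℝ) 2, HasDerivAt (fun r => a r * q r) (b r) r := fun r hr => by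
    refine HasDerivAt.congr_deriv (f := fun r => a r * q r) ((ha r hr).mul (hdq r hr)) ?_
    simp only [hb]; ring
  have hdb : ∀ r ∈ Set.Icc (1 / 4 : ℝ) 2, HasDerivAt b (b' r) r := fun r hr => by
    refine HasDerivAt.congr_deriv (f := b) (((ha' r hr).mul (hdq r hr)).sub
      (((ha r hr).mul (hdp' r hr)).mul ((hdq r hr).pow 2))) ?_
    simp [hb']; ring
  have hcont : ∀ {f f' : ℝ → ℝ}, (∀ r ∈ Set.Icc (1 / 4 : ℝ) 2, HasDerivAt f (f' r) r) →
      ContinuousOn f (Set.Icc (1 / 4) 2) := fun h r hr => (h r hr).continuousAt.continuousWithinAt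
  have hca := hcont ha
  have hca' := hcont ha'
  have hcp := hcont hdp
  have hcq := hcont hdq
  have hcb := hcont hdb
  have hcp'' : ContinuousOn p'' (Set.Icc (1 / 4) 2) := continuousOn_phSlope'' α
  have hcb' : ContinuousOn b' (Set.Icc (1 / 4) 2) := by fun_prop
  have hcE : ContinuousOn (phs α u s) (Set.Icc (1 / 4) 2) := fun r hr =>
    (hasDerivAt_phs hs.ne' (hpos r hr)).continuousAt.continuousWithinAt
  have hI : ∀ {E : Type} [NormedAddCommGroup E] [NormedSpace ℝ E] {f : ℝ → E},
      ContinuousOn f (Set.Icc (1 / 4) 2) → IntervalIntegrable f volume (1 / 4) 2 := by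
    intro E _ _ f hf
    exact (huI.symm ▸ hf : ContinuousOn f (Set.uIcc (1 / 4) 2)).intervalIntegrable
  have hbd := hvdc s u N b b' hs hdb hcb' (by simp only [hb, h0, h0', zero_mul, sub_zero])
    (by simp only [hb, h2, h2', zero_mul, sub_zero])
    (fun r hr => by
      have i1 := hinv r hr
      have i2 := hP1 r hr
      rw [Real.norm_eq_abs] at i2
      simp only [hb]
      calc _ ≤ |a' r| * |q r| + |a r| * |p' r| * |q r| ^ 2 := by
            refine (abs_sub _ _).trans ?_
            rw [abs_mul, abs_mul, abs_mul, abs_pow]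
        _ ≤ M * 8 + M * P1 * 8 ^ 2 := by
            gcongr
            exacts [hM' r hr, hM r hr]
        _ ≤ N := by
            have : 0 ≤ M * P1 := by positivity
            have : 0 ≤ M * P2 := by positivity
            have : 0 ≤ M * P1 ^ 2 := by positivity
            rw [hN]; linarith)
    (fun r hr => by
      have i1 := hinv r hr
      have i2 := hP1 r hr
      have i3 := hP2 r hr
      rw [Real.norm_eq_abs] at i2 i3
      simp only [hb']
      calc _ ≤ |a'' r| * |q r| + (2 * (|a' r| * |p' r|) + |a r| * |p'' r|) * |q r| ^ 2
              + 2 * (|a r| * |p' r| ^ 2) * |q r| ^ 3 := by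
            refine (abs_add_le _ _).trans (add_le_add ((abs_sub _ _).trans
              (add_le_add (abs_mul _ _).le ?_)) ?_)
            · rw [abs_mul, abs_pow]
              gcongr
              refine (abs_add_le _ _).trans ?_
              simp [abs_mul]
            · simp [abs_mul, abs_pow]
        _ ≤ M * 8 + (2 * (M * P1) + M * P2) * 8 ^ 2 + 2 * (M * P1 ^ 2) * 8 ^ 3 := by
            gcongr
            exacts [hM'' r hr, hM' r hr, hM r hr, hM r hr]
        _ ≤ N := by
            have : 0 ≤ M * P1 := by positivity
            rw [hN]; linarith)
  have hibp : ∫ r in (1 / 4 : ℝ)..2, phs α u s r * (a r : ℂ) =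
      Complex.I * ((s⁻¹ : ℝ) : ℂ) * ∫ r in (1 / 4 : ℝ)..2, phs α u s r * (b r : ℂ) := by
    have h1 : ∫ r in (1 / 4 : ℝ)..2, ((a r * q r : ℝ) : ℂ) *
        (Complex.I * ((s * p r : ℝ) : ℂ) * phs α u s r) =
      - ∫ r in (1 / 4 : ℝ)..2, (b r : ℂ) * phs α u s r := by
      rw [intervalIntegral.integral_mul_deriv_eq_deriv_mul
        (u' := fun r => (b r : ℂ)) (v := phs α u s)]
      · simp only [h0, h2, Complex.ofReal_zero, zero_mul, sub_zero, zero_sub]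
      · intro r hr
        rw [huI] at hr
        exact (hdaq r hr).ofReal_comp
      · intro r hr
        rw [huI] at hr
        exact hasDerivAt_phs hs.ne' (hpos r hr)
      · exact hI (Complex.continuous_ofReal.comp_continuousOn hcb)
      · exact hI ((continuousOn_const.mul
          (Complex.continuous_ofReal.comp_continuousOn (by fun_prop))).mul hcE)
    have h3 : ∫ r in (1 / 4 : ℝ)..2, phs α u s r * (a r : ℂ) =
        ∫ r in (1 / 4 : ℝ)..2, (-Complex.I * ((s⁻¹ : ℝ) : ℂ)) * (((a r * q r : ℝ) : ℂ) *
        (Complex.I * ((s * p r : ℝ) : ℂ) * phs α u s r)) := by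
      apply intervalIntegral.integral_congr
      intro r hr
      rw [huI] at hr
      have h4 : a r = s⁻¹ * (a r * q r) * (s * p r) := by
        have := hp0 r hr
        simp only [hq]; field_simp
      have h5 : (a r : ℂ) = ((s⁻¹ : ℝ) : ℂ) * ((a r * q r : ℝ) : ℂ) * ((s * p r : ℝ) : ℂ) := by
        exact_mod_cast h4
      simp only
      rw [h5]
      linear_combination (phs α u s r * ((s⁻¹ : ℝ) : ℂ) * ((a r * q r : ℝ) : ℂ) *
        ((s * p r : ℝ) : ℂ)) * Complex.I_sq
    rw [h3, intervalIntegral.integral_const_mul, h1]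
    simp only [mul_comm (phs α u s _)]
    ring
  rw [hibp, norm_mul, norm_mul, Complex.norm_I, one_mul, Complex.norm_real, Real.norm_eq_abs,
    abs_of_pos (inv_pos.2 hs)]
  calc _ ≤ s⁻¹ * (C * N * (√s)⁻¹) := by gcongr
    _ = _ := by ring

/-! ### Slicing along the direction of `x` -/

/-- The Euclidean plane, a copy of the orthogonal complement of `x`. -/
abbrev R2 := EuclideanSpace ℝ (Fin 2)

lemma exists_basis_of_unit {E : Type*} [NormedAddCommGroup E] [InnerProductSpace ℝ E]
    [FiniteDimensional ℝ E] (hE : Module.finrank ℝ E = 3) (v : E) (hv : ‖v‖ = 1) :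
    ∃ b : OrthonormalBasis (Fin 3) ℝ E, b 0 = v := by
  have h := Orthonormal.exists_orthonormalBasis_extension_of_card_eq (𝕜 := ℝ) (E := E)
    (ι := Fin 3) (by simp [hE]) (v := fun _ => v) (s := {0}) (by
      constructor
      · intro i; simpa using hv
      · intro i j hij
        exact absurd (Subsingleton.elim i j) hij)
  obtain ⟨b, hb⟩ := h
  exact ⟨b, hb 0 rfl⟩

/-- Coordinates on `ℝ³` adapted to `x`: a linear isometry from `ℝ × ℝ²` sending the first axis to
the line of `x`; for `x = 0` any axis will do. -/
lemma exists_axis_isometry (x : R3) : ∃ Ψ : WithLp 2 (ℝ × R2) ≃ₗᵢ[ℝ] R3,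
    ∀ z y, ⟪x, Ψ (WithLp.toLp 2 (z, y))⟫ = ‖x‖ * z := by
  obtain ⟨v, hv, hxv⟩ : ∃ v : R3, ‖v‖ = 1 ∧ x = ‖x‖ • v := by
    rcases eq_or_ne x 0 with rfl | hx
    · exact ⟨EuclideanSpace.single 0 1, by simp, by simp⟩
    · exact ⟨‖x‖⁻¹ • x, norm_smul_inv_norm hx, by
        rw [smul_smul, mul_inv_cancel₀ (norm_ne_zero_iff.2 hx), one_smul]⟩
  obtain ⟨b, hb⟩ := exists_basis_of_unit (by simp) v hv
  obtain ⟨c, hc⟩ := exists_basis_of_unit (E := WithLp 2 (ℝ × R2))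
    (by rw [(WithLp.linearEquiv 2 ℝ (ℝ × R2)).finrank_eq]; simp)
    (WithLp.toLp 2 ((1 : ℝ), (0 : R2))) (by simp)
  refine ⟨c.equiv b (Equiv.refl _), fun z y => ?_⟩
  have h1 : v = c.equiv b (Equiv.refl _) (WithLp.toLp 2 ((1 : ℝ), (0 : R2))) := by
    rw [← hc, ← hb]; simp
  conv_lhs => rw [hxv, inner_smul_left, h1, LinearIsometryEquiv.inner_map_map]
  simp

/-- The oscillatory integral of a radial function over `ℝ³` as an iterated one-dimensional one:
cylindrical coordinates `(z, ρ)` about the axis `x`, the substitution `r = √(z² + ρ²)`, and Fubini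
on the region `|z| < r`. -/
lemma polar (g : ℝ → ℂ) (hg : Continuous g) (hg0 : ∀ r, r ∉ Set.Icc (1 / 4 : ℝ) 2 → g r = 0)
    (x : R3) :
    ∫ ξ : R3, Complex.exp (Complex.I * ((⟪x, ξ⟫ : ℝ) : ℂ)) * g ‖ξ‖ =
      (2 * (volume : Measure R2).real (Metric.ball 0 1) : ℝ) •
        ∫ r in (1 / 4 : ℝ)..2, ∫ z in -r..r,
          Complex.exp (Complex.I * ((‖x‖ * z : ℝ) : ℂ)) * ((r : ℂ) * g r) := by
  obtain ⟨Ψ, hΨ⟩ := exists_axis_isometry x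
  set κ : ℝ := 2 * (volume : Measure R2).real (Metric.ball 0 1) with hκ
  set e : ℝ → ℂ := fun z => Complex.exp (Complex.I * ((‖x‖ * z : ℝ) : ℂ)) with he
  have hec : Continuous e := by fun_prop
  have hmp : MeasurePreserving (fun w : ℝ × R2 => Ψ (WithLp.toLp 2 w)) :=
    Ψ.measurePreserving.comp (WithLp.volume_preserving_toLp ℝ R2)
  have hemb : MeasurableEmbedding (fun w : ℝ × R2 => Ψ (WithLp.toLp 2 w)) :=
    Ψ.toMeasurableEquiv.measurableEmbedding.comp (MeasurableEquiv.toLp 2 (ℝ × R2)).measurableEmbedding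
  have hval : ∀ w : ℝ × R2, Complex.exp (Complex.I * ((⟪x, Ψ (WithLp.toLp 2 w)⟫ : ℝ) : ℂ)) *
      g ‖Ψ (WithLp.toLp 2 w)‖ = e w.1 * g (√(w.1 ^ 2 + ‖w.2‖ ^ 2)) := by
    rintro ⟨z, y⟩
    rw [hΨ, LinearIsometryEquiv.norm_map, WithLp.prod_norm_eq_of_L2]
    simp [he]
  have hcg : HasCompactSupport g := HasCompactSupport.intro isCompact_Icc hg0
  have hker : Integrable (fun ξ : R3 => Complex.exp (Complex.I * ((⟪x, ξ⟫ : ℝ) : ℂ)) * g ‖ξ‖) := by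
    refine Continuous.integrable_of_hasCompactSupport (by fun_prop) ?_
    refine HasCompactSupport.intro (isCompact_closedBall (0 : R3) 2) fun ξ hξ => ?_
    rw [hg0, mul_zero]
    intro h
    exact hξ (by simpa using h.2)
  have hprod : Integrable (fun w : ℝ × R2 => e w.1 * g (√(w.1 ^ 2 + ‖w.2‖ ^ 2)))
      ((volume : Measure ℝ).prod (volume : Measure R2)) := by
    have := (hmp.integrable_comp_emb hemb).2 hker
    exact this.congr (Filter.Eventually.of_forall hval)
  -- the integral over the plane orthogonal to the axis
  have hplane : ∀ z : ℝ, ∫ y : R2, e z * g (√(z ^ 2 + ‖y‖ ^ 2)) =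
      κ • ∫ r in Set.Ioi |z|, e z * ((r : ℂ) * g r) := by
    intro z
    have hsub : ∫ ρ in Set.Ioi (0 : ℝ), (ρ : ℝ) • g (√(z ^ 2 + ρ ^ 2)) =
        ∫ r in Set.Ioi |z|, (r : ℂ) * g r := by
      have hf0 : √(z ^ 2 + 0 ^ 2) = |z| := by simp [Real.sqrt_sq_eq_abs]
      have hcont : Continuous fun ρ : ℝ => √(z ^ 2 + ρ ^ 2) := by fun_prop
      have hge : ∀ ρ : ℝ, |ρ| ≤ √(z ^ 2 + ρ ^ 2) := fun ρ =>
        Real.abs_le_sqrt (by nlinarith [sq_nonneg z])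
      have hrg : Continuous fun r : ℝ => (r : ℂ) * g r := by fun_prop
      have hcs : ContinuousOn (fun ρ : ℝ => (ρ : ℝ) • g (√(z ^ 2 + ρ ^ 2))) (Set.Ici 0) := by
        fun_prop
      have key : ∀ ρ ∈ Set.Ioi (0 : ℝ), (ρ : ℝ) • g (√(z ^ 2 + ρ ^ 2)) =
          (ρ / √(z ^ 2 + ρ ^ 2)) • ((fun r : ℝ => (r : ℂ) * g r) ∘ fun ρ => √(z ^ 2 + ρ ^ 2)) ρ := by
        intro ρ hρ
        have h1 : 0 < √(z ^ 2 + ρ ^ 2) := by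
          have : 0 < ρ := hρ
          positivity
        have h2 : (√(z ^ 2 + ρ ^ 2) : ℂ) ≠ 0 := by exact_mod_cast h1.ne'
        simp only [Function.comp, Complex.real_smul]
        push_cast
        field_simp
      have h := integral_deriv_smul_comp_Ioi (f := fun ρ : ℝ => √(z ^ 2 + ρ ^ 2))
        (f' := fun ρ => ρ / √(z ^ 2 + ρ ^ 2)) (g := fun r : ℝ => (r : ℂ) * g r) (a := 0)
        hcont.continuousOn
        (Filter.tendsto_atTop_mono (fun ρ => (le_abs_self ρ).trans (hge ρ)) Filter.tendsto_id)
        (fun ρ hρ => by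
          have hρ : 0 < ρ := hρ
          have h1 : z ^ 2 + ρ ^ 2 ≠ 0 := by positivity
          have h := ((hasDerivAt_pow 2 ρ).const_add (z ^ 2)).sqrt h1
          refine (h.congr_deriv ?_).hasDerivWithinAt
          have : 0 < √(z ^ 2 + ρ ^ 2) := by positivity
          field_simp
          simp)
        hrg.continuousOn
        (Continuous.integrable_of_hasCompactSupport hrg hcg.mul_left).integrableOn
        (by
          rw [integrableOn_Ici_iff_integrableOn_Ioi]
          refine IntegrableOn.congr_fun ?_ key measurableSet_Ioi
          refine (Continuous.integrable_of_hasCompactSupport (by fun_prop) ?_).integrableOn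
          refine HasCompactSupport.intro (isCompact_closedBall (0 : ℝ) 2) fun ρ hρ => ?_
          rw [hg0, smul_zero]
          intro h
          exact hρ (by simpa using (hge ρ).trans h.2))
      rw [setIntegral_congr_fun measurableSet_Ioi key, h, hf0]
    rw [integral_const_mul, integral_fun_norm_addHaar volume (fun ρ => g (√(z ^ 2 + ρ ^ 2)))]
    rw [integral_const_mul]
    simp only [finrank_euclideanSpace, Fintype.card_fin, Nat.add_one_sub_one, pow_one]
    rw [hsub, hκ]
    simp only [Complex.real_smul, nsmul_eq_mul]
    push_cast
    ring
  -- Fubini in the variables `(z, r)`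
  set H : ℝ × ℝ → ℂ := fun w => e w.1 * ((w.2 : ℂ) * g w.2) with hH
  have hHc : Continuous H := by fun_prop
  set S : Set (ℝ × ℝ) := {w | |w.1| < w.2} with hS
  have hSm : MeasurableSet S := measurableSet_lt (by fun_prop) (by fun_prop)
  have hSint : Integrable (S.indicator H) ((volume : Measure ℝ).prod (volume : Measure ℝ)) := by
    have hK : IsCompact (Set.Icc (-2 : ℝ) 2 ×ˢ Set.Icc (1 / 4 : ℝ) 2) :=
      isCompact_Icc.prod isCompact_Icc
    have h1 : IntegrableOn H (Set.Icc (-2 : ℝ) 2 ×ˢ Set.Icc (1 / 4 : ℝ) 2)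
        ((volume : Measure ℝ).prod (volume : Measure ℝ)) :=
      hHc.continuousOn.integrableOn_compact hK
    have h2 := ((integrable_indicator_iff hK.measurableSet).2 h1).indicator hSm
    refine h2.congr (Filter.Eventually.of_forall fun w => ?_)
    by_cases hw : w ∈ S
    · rw [Set.indicator_of_mem hw, Set.indicator_of_mem hw]
      by_cases hr : w.2 ∈ Set.Icc (1 / 4 : ℝ) 2
      · rw [Set.indicator_of_mem]
        have hw' : |w.1| < w.2 := hw
        exact ⟨abs_le.1 (hw'.le.trans hr.2), hr⟩
      · rw [Set.indicator_of_notMem (fun h => hr h.2)]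
        simp [hH, hg0 _ hr]
    · rw [Set.indicator_of_notMem hw, Set.indicator_of_notMem hw]
  have hswap := integral_integral_swap (f := fun z r => S.indicator H (z, r)) hSint
  have hL : ∀ z : ℝ, ∫ r in Set.Ioi |z|, e z * ((r : ℂ) * g r) = ∫ r, S.indicator H (z, r) := by
    intro z
    rw [← integral_indicator measurableSet_Ioi]
    rfl
  have hR : ∫ r, ∫ z, S.indicator H (z, r) =
      ∫ r in (1 / 4 : ℝ)..2, ∫ z in -r..r, e z * ((r : ℂ) * g r) := by
    rw [intervalIntegral.integral_of_le (by norm_num), ← integral_Icc_eq_integral_Ioc,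
      ← integral_indicator measurableSet_Icc]
    refine integral_congr_ae (Filter.Eventually.of_forall fun r => ?_)
    by_cases hr : r ∈ Set.Icc (1 / 4 : ℝ) 2
    · rw [Set.indicator_of_mem hr]
      have hr0 : 0 < r := by linarith [hr.1]
      rw [intervalIntegral.integral_of_le (by linarith), integral_Ioc_eq_integral_Ioo,
        ← integral_indicator measurableSet_Ioo]
      refine integral_congr_ae (Filter.Eventually.of_forall fun z => ?_)
      simp only [Set.indicator_apply, hS, Set.mem_ofPred_eq, Set.mem_Ioo, abs_lt, hH]
    · rw [Set.indicator_of_notMem hr]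
      refine integral_eq_zero_of_ae (Filter.Eventually.of_forall fun z => ?_)
      simp [Set.indicator_apply, hH, hg0 r hr]
  rw [← hmp.integral_comp hemb]
  simp only [hval]
  rw [Measure.volume_eq_prod, integral_prod _ hprod]
  simp only [hplane]
  rw [integral_smul]
  simp only [hL]
  rw [hswap, hR]

/-! ### The kernel -/

/-- The estimates `vdc` and `nonstat` for a smooth amplitude vanishing near both endpoints, with a
common constant. -/
lemma amplitude_bounds {α : ℝ} (hα : α ∈ Set.Ioo (1 : ℝ) 2) {a : ℝ → ℝ}
    (ha : ContDiff ℝ (⊤ : ℕ∞) a) (h1 : a =ᶠ[nhds (1 / 4)] 0) (h2 : a =ᶠ[nhds 2] 0) :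
    ∃ C : ℝ, 0 < C ∧ ∀ s u : ℝ, 0 < s →
      ‖∫ r in (1 / 4 : ℝ)..2, phs α u s r * (a r : ℂ)‖ ≤ C * (√s)⁻¹ ∧
      (|u| ≤ s / 8 →
        ‖∫ r in (1 / 4 : ℝ)..2, phs α u s r * (a r : ℂ)‖ ≤ C * (s⁻¹ * (√s)⁻¹)) := by
  have ha' : ContDiff ℝ (⊤ : ℕ∞) (deriv a) := (contDiff_infty_iff_deriv.1 ha).2
  have ha'' : ContDiff ℝ (⊤ : ℕ∞) (deriv (deriv a)) := (contDiff_infty_iff_deriv.1 ha').2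
  have d1 : ∀ r, HasDerivAt a (deriv a r) r := fun r =>
    ((contDiff_infty_iff_deriv.1 ha).1 r).hasDerivAt
  have d2 : ∀ r, HasDerivAt (deriv a) (deriv (deriv a) r) r := fun r =>
    ((contDiff_infty_iff_deriv.1 ha').1 r).hasDerivAt
  have bd : ∀ f : ℝ → ℝ, Continuous f → ∃ M, 0 ≤ M ∧ ∀ r ∈ Set.Icc (1 / 4 : ℝ) 2, |f r| ≤ M := by
    intro f hf
    obtain ⟨M, hM⟩ := isCompact_Icc.exists_bound_of_continuousOn
      (s := Set.Icc (1 / 4 : ℝ) 2) hf.continuousOn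
    exact ⟨M, (norm_nonneg _).trans (hM 2 ⟨by norm_num, le_rfl⟩), hM⟩
  obtain ⟨M0, hM0, hb0⟩ := bd a ha.continuous
  obtain ⟨M1, hM1, hb1⟩ := bd _ ha'.continuous
  obtain ⟨M2, hM2, hb2⟩ := bd _ ha''.continuous
  have e1 : deriv a (1 / 4) = 0 := by rw [h1.deriv_eq]; simp
  have e2 : deriv a 2 = 0 := by rw [h2.deriv_eq]; simp
  obtain ⟨C1, hC1, hv⟩ := vdc hα
  obtain ⟨C2, hC2, hn⟩ := nonstat hα (M := M0 + M1 + M2) (fun r _ => d1 r) (fun r _ => d2 r)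
    ha''.continuous.continuousOn h1.eq_of_nhds h2.eq_of_nhds e1 e2
    (fun r hr => by linarith [hb0 r hr]) (fun r hr => by linarith [hb1 r hr])
    (fun r hr => by linarith [hb2 r hr])
  refine ⟨C1 * (M0 + M1 + M2) + C2, by positivity, fun s u hs => ⟨?_, fun hu => ?_⟩⟩
  · refine (hv s u (M0 + M1 + M2) a (deriv a) hs (fun r _ => d1 r) ha'.continuous.continuousOn
      h1.eq_of_nhds h2.eq_of_nhds (fun r hr => by linarith [hb0 r hr])
      (fun r hr => by linarith [hb1 r hr])).trans ?_
    have : 0 ≤ (√s)⁻¹ := by positivity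
    nlinarith
  · refine (hn s u hs hu).trans ?_
    have : 0 ≤ (s⁻¹ * (√s)⁻¹) := by positivity
    have : 0 ≤ C1 * (M0 + M1 + M2) := by positivity
    nlinarith

/-- The bound `s^{-3/2}` for the kernel at frequency one, uniform in `x`. -/
lemma kernel_unit {α : ℝ} (hα : α ∈ Set.Ioo (1 : ℝ) 2) {φ₀ : ℝ → ℝ} (hφ₀ : IsLPBump φ₀) :
    ∃ C : ℝ, 0 < C ∧ ∀ (s : ℝ) (x : R3), 0 < s →
      ‖∫ ξ : R3, Complex.exp (Complex.I * (((⟪x, ξ⟫ : ℝ) : ℂ) - (s : ℂ) * ((‖ξ‖ ^ α : ℝ) : ℂ))) *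
        ((φ₀ ‖ξ‖ - φ₀ (2 * ‖ξ‖) : ℝ) : ℂ)‖ ≤ C * (s⁻¹ * (√s)⁻¹) := by
  set ψ : ℝ → ℝ := fun r => φ₀ r - φ₀ (2 * r) with hψ
  have hsm : ContDiff ℝ (⊤ : ℕ∞) ψ :=
    hφ₀.smooth.sub (hφ₀.smooth.comp (contDiff_const.mul contDiff_id))
  have hψlow : ∀ r, |r| < 1 / 2 → ψ r = 0 := fun r hr => by
    simp only [hψ]
    rw [hφ₀.one r (by linarith), hφ₀.one (2 * r) (by rw [abs_mul, abs_two]; linarith), sub_self]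
  have hψhigh : ∀ r, 5 / 4 < r → ψ r = 0 := fun r hr => by
    simp only [hψ]
    rw [hφ₀.supp r (by rw [abs_of_pos (by linarith)]; exact hr),
      hφ₀.supp (2 * r) (by rw [abs_of_pos (by linarith)]; linarith), sub_self]
  have n1 : ∀ᶠ r in nhds (1 / 4 : ℝ), ψ r = 0 := by
    have : Set.Ioo (0 : ℝ) (1 / 2) ∈ nhds (1 / 4 : ℝ) := Ioo_mem_nhds (by norm_num) (by norm_num)
    filter_upwards [this] with r hr
    exact hψlow r (by rw [abs_of_pos hr.1]; exact hr.2)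
  have n2 : ∀ᶠ r in nhds (2 : ℝ), ψ r = 0 := by
    filter_upwards [lt_mem_nhds (show (5 / 4 : ℝ) < 2 by norm_num)] with r hr
    exact hψhigh r hr
  obtain ⟨C1, hC1, hb1⟩ := amplitude_bounds hα (a := fun r => r * ψ r) (contDiff_id.mul hsm)
    (n1.mono fun r hr => by simp [hr]) (n2.mono fun r hr => by simp [hr])
  obtain ⟨C2, hC2, hb2⟩ := amplitude_bounds hα (a := fun r => r ^ 2 * ψ r)
    ((contDiff_id.pow 2).mul hsm)
    (n1.mono fun r hr => by simp [hr]) (n2.mono fun r hr => by simp [hr])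
  set κ : ℝ := 2 * (volume : Measure R2).real (Metric.ball 0 1) with hκ
  have hκ0 : 0 ≤ κ := by positivity
  refine ⟨κ * (16 * C1 + 2 * C2) + 1, by positivity, fun s x hs => ?_⟩
  have hα0 : 0 < α := by linarith [hα.1]
  -- the cutoff at `0` makes `g` vanish on the negative half-line without changing `g ‖ξ‖`
  set g : ℝ → ℂ := fun r =>
    Complex.exp (-(Complex.I * ((s * r ^ α : ℝ) : ℂ))) * (ψ (max r 0) : ℂ) with hg
  have hrp : Continuous fun r : ℝ => r ^ α := Real.continuous_rpow_const hα0.le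
  have hψc : Continuous ψ := hsm.continuous
  have hgc : Continuous g := by fun_prop
  have hg0 : ∀ r, r ∉ Set.Icc (1 / 4 : ℝ) 2 → g r = 0 := by
    intro r hr
    have : ψ (max r 0) = 0 := by
      by_cases h1 : r < 1 / 4
      · refine hψlow _ ?_
        rw [abs_of_nonneg (le_max_right _ _)]
        exact max_lt (by linarith) (by norm_num)
      · refine hψhigh _ (lt_max_of_lt_left ?_)
        by_contra h2
        exact hr ⟨by linarith, by linarith⟩
    simp [hg, this]
  have hpol := polar g hgc hg0 x
  have hLHS : ∫ ξ : R3, Complex.exp (Complex.I * (((⟪x, ξ⟫ : ℝ) : ℂ) -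
      (s : ℂ) * ((‖ξ‖ ^ α : ℝ) : ℂ))) * ((φ₀ ‖ξ‖ - φ₀ (2 * ‖ξ‖) : ℝ) : ℂ) =
      ∫ ξ : R3, Complex.exp (Complex.I * ((⟪x, ξ⟫ : ℝ) : ℂ)) * g ‖ξ‖ := by
    refine integral_congr_ae (Filter.Eventually.of_forall fun ξ => ?_)
    simp only [hg, hψ, max_eq_left (norm_nonneg ξ)]
    rw [← mul_assoc, ← Complex.exp_add]
    congr 2
    push_cast
    ring
  rw [hLHS, hpol, norm_smul, Real.norm_eq_abs, abs_of_nonneg hκ0]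
  have hs' : 0 < s⁻¹ * (√s)⁻¹ := by
    have := Real.sqrt_pos.2 hs
    positivity
  have huI : Set.uIcc (1 / 4 : ℝ) 2 = Set.Icc (1 / 4) 2 := Set.uIcc_of_le (by norm_num)
  have hphs : ∀ u r : ℝ, r ∈ Set.Icc (1 / 4 : ℝ) 2 →
      Complex.exp (Complex.I * ((u * r : ℝ) : ℂ)) * g r = phs α u s r * (ψ r : ℂ) := by
    intro u r hr
    have hr0 : 0 ≤ r := by linarith [hr.1]
    simp only [hg, phs, max_eq_left hr0]
    rw [← mul_assoc, ← Complex.exp_add]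
    congr 2
    push_cast
    ring
  have hphc : Continuous fun w : ℝ × ℝ => phs α (‖x‖ * w.2) s w.1 := by
    unfold phs
    have : Continuous fun w : ℝ × ℝ => w.1 ^ α := hrp.comp continuous_fst
    fun_prop
  have hphc' : ∀ u, Continuous (phs α u s) := by
    intro u
    unfold phs
    fun_prop
  suffices hD : ‖∫ r in (1 / 4 : ℝ)..2, ∫ z in -r..r,
      Complex.exp (Complex.I * ((‖x‖ * z : ℝ) : ℂ)) * ((r : ℂ) * g r)‖ ≤
      (16 * C1 + 2 * C2) * (s⁻¹ * (√s)⁻¹) by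
    calc _ ≤ κ * ((16 * C1 + 2 * C2) * (s⁻¹ * (√s)⁻¹)) := by gcongr
      _ ≤ _ := by nlinarith
  -- nonstationary for every frequency in `[-‖x‖, ‖x‖]`, or else `1/‖x‖ ≤ 8/s`
  rcases le_or_gt ‖x‖ (s / 8) with hx | hx
  · have hD : ∫ r in (1 / 4 : ℝ)..2, ∫ z in -r..r,
        Complex.exp (Complex.I * ((‖x‖ * z : ℝ) : ℂ)) * ((r : ℂ) * g r) =
        ∫ r in (1 / 4 : ℝ)..2, ∫ w in (-1 : ℝ)..1,
          phs α (‖x‖ * w) s r * ((r ^ 2 * ψ r : ℝ) : ℂ) := by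
      refine intervalIntegral.integral_congr fun r hr => ?_
      rw [huI] at hr
      have h := intervalIntegral.smul_integral_comp_mul_left (a := -1) (b := 1)
        (fun z : ℝ => Complex.exp (Complex.I * ((‖x‖ * z : ℝ) : ℂ)) * ((r : ℂ) * g r)) r
      rw [mul_neg_one, mul_one] at h
      rw [← h, ← intervalIntegral.integral_smul]
      refine intervalIntegral.integral_congr fun w _ => ?_
      simp only [Complex.real_smul]
      have h3 := hphs (‖x‖ * w) r hr
      rw [show ‖x‖ * (r * w) = ‖x‖ * w * r by ring]
      push_cast at h3 ⊢
      linear_combination ((r : ℂ) ^ 2) * h3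
    -- the substitution `z = r w` made the inner domain independent of `r`, so that the integral
    -- in `r` can be done first
    rw [hD, intervalIntegral_intervalIntegral_swap]
    · refine (intervalIntegral.norm_integral_le_of_norm_le_const
        (C := C2 * (s⁻¹ * (√s)⁻¹)) fun w hw => ?_).trans ?_
      · refine (hb2 s (‖x‖ * w) hs).2 ?_
        rw [Set.uIoc_of_le (by norm_num)] at hw
        have : |w| ≤ 1 := abs_le.2 ⟨hw.1.le, hw.2⟩
        rw [abs_mul, abs_norm]
        calc ‖x‖ * |w| ≤ ‖x‖ * 1 := by gcongr
          _ ≤ s / 8 := by linarith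
      · rw [show |(1 : ℝ) - -1| = 2 by norm_num]
        nlinarith
    · refine IntegrableOn.mono_set (t := Set.uIcc (1 / 4 : ℝ) 2 ×ˢ Set.uIcc (-1 : ℝ) 1) ?_
        (Set.prod_mono Set.uIoc_subset_uIcc Set.uIoc_subset_uIcc)
      refine ContinuousOn.integrableOn_compact (isCompact_uIcc.prod isCompact_uIcc) ?_
      refine Continuous.continuousOn (hphc.mul ?_)
      fun_prop
  · have hx0 : 0 < ‖x‖ := by linarith
    have hxC : (‖x‖ : ℂ) ≠ 0 := by exact_mod_cast hx0.ne'
    have hD : ∫ r in (1 / 4 : ℝ)..2, ∫ z in -r..r,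
        Complex.exp (Complex.I * ((‖x‖ * z : ℝ) : ℂ)) * ((r : ℂ) * g r) =
        (Complex.I * (‖x‖ : ℂ))⁻¹ *
          ((∫ r in (1 / 4 : ℝ)..2, phs α ‖x‖ s r * ((r * ψ r : ℝ) : ℂ)) -
          ∫ r in (1 / 4 : ℝ)..2, phs α (-‖x‖) s r * ((r * ψ r : ℝ) : ℂ)) := by
      rw [← intervalIntegral.integral_sub, ← intervalIntegral.integral_const_mul]
      · refine intervalIntegral.integral_congr fun r hr => ?_
        rw [huI] at hr
        have h1 := hphs ‖x‖ r hr
        have h2 := hphs (-‖x‖) r hr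
        have h3 : ∫ z in -r..r, Complex.exp (Complex.I * ((‖x‖ * z : ℝ) : ℂ)) =
            (Complex.exp (Complex.I * ((‖x‖ * r : ℝ) : ℂ)) -
              Complex.exp (Complex.I * ((-‖x‖ * r : ℝ) : ℂ))) / (Complex.I * (‖x‖ : ℂ)) := by
          have h := integral_exp_mul_complex (a := -r) (b := r)
            (c := Complex.I * (‖x‖ : ℂ)) (mul_ne_zero Complex.I_ne_zero hxC)
          push_cast at h ⊢
          simpa only [mul_assoc, neg_mul, mul_neg] using h
        rw [intervalIntegral.integral_mul_const, h3, div_eq_inv_mul]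
        push_cast at h1 h2 ⊢
        linear_combination (Complex.I * (‖x‖ : ℂ))⁻¹ * (r : ℂ) * (h1 - h2)
      · exact Continuous.intervalIntegrable ((hphc' _).mul (by fun_prop)) _ _
      · exact Continuous.intervalIntegrable ((hphc' _).mul (by fun_prop)) _ _
    rw [hD, norm_mul, norm_inv, norm_mul, Complex.norm_I, one_mul, Complex.norm_real, norm_norm]
    have hinv : ‖x‖⁻¹ ≤ 8 * s⁻¹ := by
      rw [← inv_inv (8 : ℝ), ← mul_inv]
      exact inv_anti₀ (by positivity) (by linarith)
    have hsq : 0 ≤ (√s)⁻¹ := by positivity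
    calc _ ≤ (8 * s⁻¹) * (C1 * (√s)⁻¹ + C1 * (√s)⁻¹) := by
          gcongr
          exact (norm_sub_le _ _).trans
            (add_le_add (hb1 s ‖x‖ hs).1 (hb1 s (-‖x‖) hs).1)
      _ ≤ _ := by nlinarith

/-- The kernel of `e^{-itD^α} P_k`, reduced to `kernel_unit` by `ξ ↦ 2^k ξ`, which turns `t` into
`t 2^{αk}` and costs the Jacobian `2^{3k}`. -/
lemma kernel_bound {α : ℝ} (hα : α ∈ Set.Ioo (1 : ℝ) 2) {φ₀ : ℝ → ℝ} (hφ₀ : IsLPBump φ₀) :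
    ∃ C : ℝ, 0 < C ∧ ∀ (t : ℝ) (k : ℤ) (x : R3), 0 < t →
      ‖∫ ξ : R3, Complex.exp (Complex.I * (((⟪x, ξ⟫ : ℝ) : ℂ) - (t : ℂ) * ((‖ξ‖ ^ α : ℝ) : ℂ))) *
        ((psiK φ₀ k ξ : ℝ) : ℂ)‖ ≤
        C * t ^ (-(3 : ℝ) / 2) * (2 : ℝ) ^ ((3 * (1 - α / 2)) * (k : ℝ)) := by
  obtain ⟨C, hC, hb⟩ := kernel_unit hα hφ₀
  refine ⟨C, hC, fun t k x ht => ?_⟩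
  set l : ℝ := (2 : ℝ) ^ k with hl
  have hl0 : 0 < l := by positivity
  set F : R3 → ℂ := fun ξ => Complex.exp (Complex.I * (((⟪x, ξ⟫ : ℝ) : ℂ) -
    (t : ℂ) * ((‖ξ‖ ^ α : ℝ) : ℂ))) * ((psiK φ₀ k ξ : ℝ) : ℂ) with hF
  have hscale := Measure.integral_comp_smul (volume : Measure R3) F l
  rw [finrank_euclideanSpace, Fintype.card_fin, abs_of_pos (by positivity)] at hscale
  have hFl : ∀ ξ : R3, F (l • ξ) = Complex.exp (Complex.I * (((⟪l • x, ξ⟫ : ℝ) : ℂ) -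
      ((t * l ^ α : ℝ) : ℂ) * ((‖ξ‖ ^ α : ℝ) : ℂ))) *
        ((φ₀ ‖ξ‖ - φ₀ (2 * ‖ξ‖) : ℝ) : ℂ) := by
    intro ξ
    have e1 : (2 : ℝ) ^ (-k) * (l * ‖ξ‖) = ‖ξ‖ := by
      rw [hl, ← mul_assoc, ← zpow_add₀ two_ne_zero]; simp
    have e2 : (2 : ℝ) ^ (1 - k) * (l * ‖ξ‖) = 2 * ‖ξ‖ := by
      rw [hl, ← mul_assoc, ← zpow_add₀ two_ne_zero]; simp
    simp only [hF, psiK, norm_smul, Real.norm_eq_abs, abs_of_pos hl0, e1, e2, real_inner_smul_left,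
      real_inner_smul_right, Real.mul_rpow hl0.le (norm_nonneg ξ)]
    congr 2
    push_cast
    ring
  have h1 : ∫ ξ, F ξ = (l ^ 3) • ∫ ξ, F (l • ξ) := by
    rw [hscale, smul_smul, mul_inv_cancel₀ (by positivity), one_smul]
  have hs : 0 < t * l ^ α := by positivity
  rw [h1, norm_smul, Real.norm_eq_abs, abs_of_pos (by positivity)]
  simp only [hFl]
  calc _ ≤ l ^ 3 * (C * ((t * l ^ α)⁻¹ * (√(t * l ^ α))⁻¹)) := by
        gcongr
        exact hb (t * l ^ α) (l • x) hs
    _ = _ := by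
        have e1 : (t * l ^ α)⁻¹ * (√(t * l ^ α))⁻¹ = (t * l ^ α) ^ (-(3 : ℝ) / 2) := by
          rw [Real.sqrt_eq_rpow, ← Real.rpow_neg hs.le, ← Real.rpow_neg_one, ← Real.rpow_add hs]
          norm_num
        have hl2 : l = (2 : ℝ) ^ (k : ℝ) := by rw [hl, Real.rpow_intCast]
        rw [e1, Real.mul_rpow ht.le (by positivity), ← Real.rpow_natCast l 3, hl2,
          ← Real.rpow_mul zero_le_two, ← Real.rpow_mul zero_le_two, ← Real.rpow_mul zero_le_two]
        have e2 : (2 : ℝ) ^ ((3 * (1 - α / 2)) * (k : ℝ)) =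
            (2 : ℝ) ^ ((k : ℝ) * ((3 : ℕ) : ℝ)) * (2 : ℝ) ^ ((k : ℝ) * α * (-3 / 2)) := by
          rw [← Real.rpow_add (by norm_num)]
          congr 1
          push_cast
          ring
        rw [e2]
        ring

/-! ### The convolution formula and the dispersive estimate -/

lemma psiK_continuous {φ₀ : ℝ → ℝ} (hφ₀ : IsLPBump φ₀) (k : ℤ) : Continuous (psiK φ₀ k) := by
  have := hφ₀.smooth.continuous
  unfold psiK
  fun_prop

lemma psiK_integrable {φ₀ : ℝ → ℝ} (hφ₀ : IsLPBump φ₀) (k : ℤ) :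
    Integrable (fun ξ : R3 => ((psiK φ₀ k ξ : ℝ) : ℂ)) := by
  have hc := psiK_continuous hφ₀ k
  refine Continuous.integrable_of_hasCompactSupport (by fun_prop) ?_
  refine HasCompactSupport.intro (isCompact_closedBall (0 : R3) (2 ^ k * (5 / 4))) fun ξ hξ => ?_
  have hξ' : 2 ^ k * (5 / 4) < ‖ξ‖ := by simpa using hξ
  have h2 : (0 : ℝ) < 2 ^ k := by positivity
  have h1 : 5 / 4 < (2 : ℝ) ^ (-k) * ‖ξ‖ := by
    rw [zpow_neg, inv_mul_eq_div, lt_div_iff₀ h2]; linarith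
  have h3 : 5 / 4 < (2 : ℝ) ^ (1 - k) * ‖ξ‖ := by
    rw [sub_eq_add_neg, zpow_add₀ two_ne_zero, zpow_one]
    nlinarith
  rw [psiK, hφ₀.supp _ (h1.trans_le (le_abs_self _)), hφ₀.supp _ (h3.trans_le (le_abs_self _))]
  simp

/-- `e^{-itD^α} P_k f` as the convolution of `f` with the kernel bounded in `kernel_bound`. -/
lemma propPk_eq {α : ℝ} (hα : 0 ≤ α) {φ₀ : ℝ → ℝ} (hφ₀ : IsLPBump φ₀) (t : ℝ) (k : ℤ)
    {f : R3 → ℂ} (hf : Integrable f (volume : Measure R3)) (x : R3) :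
    propPk φ₀ α t k f x = (((2 * π) ^ (-(3 : ℝ) / 2) : ℝ) : ℂ) ^ 2 * ∫ y : R3,
      (∫ ξ : R3, Complex.exp (Complex.I * (((⟪x - y, ξ⟫ : ℝ) : ℂ) -
        (t : ℂ) * ((‖ξ‖ ^ α : ℝ) : ℂ))) * ((psiK φ₀ k ξ : ℝ) : ℂ)) * f y := by
  set c : ℂ := (((2 * π) ^ (-(3 : ℝ) / 2) : ℝ) : ℂ) with hc
  set G : R3 → R3 → ℂ := fun ξ y => Complex.exp (Complex.I * (((⟪x - y, ξ⟫ : ℝ) : ℂ) -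
        (t : ℂ) * ((‖ξ‖ ^ α : ℝ) : ℂ))) * (((psiK φ₀ k ξ : ℝ) : ℂ) * f y) with hG
  have hG_int : Integrable (Function.uncurry G)
      ((volume : Measure R3).prod (volume : Measure R3)) := by
    have h := (psiK_integrable hφ₀ k).mul_prod hf
    refine h.bdd_mul (c := 1) ?_ (Filter.Eventually.of_forall ?_)
    · have hrp : Continuous fun r : ℝ => r ^ α := Real.continuous_rpow_const hα
      have : Continuous fun w : R3 × R3 => ‖w.1‖ ^ α := hrp.comp (by fun_prop)
      have h2 : Continuous fun w : R3 × R3 => ⟪x - w.2, w.1⟫ := by fun_prop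
      exact Continuous.aestronglyMeasurable (by fun_prop)
    · rintro ⟨ξ, y⟩
      have : Complex.I * (((⟪x - y, ξ⟫ : ℝ) : ℂ) - (t : ℂ) * ((‖ξ‖ ^ α : ℝ) : ℂ)) =
          ((⟪x - y, ξ⟫ - t * ‖ξ‖ ^ α : ℝ) : ℂ) * Complex.I := by push_cast; ring
      simp only
      rw [this, Complex.norm_exp_ofReal_mul_I]
  have hL : ∀ ξ : R3, Complex.exp (Complex.I * (((⟪x, ξ⟫ : ℝ) : ℂ) -
      (t : ℂ) * ((‖ξ‖ ^ α : ℝ) : ℂ))) * ((psiK φ₀ k ξ : ℝ) : ℂ) * ft f ξ = c * ∫ y, G ξ y := by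
    intro ξ
    rw [ft, ← hc, mul_left_comm, ← integral_const_mul]
    congr 1
    refine integral_congr_ae (Filter.Eventually.of_forall fun y => ?_)
    have : Complex.exp (Complex.I * (((⟪x - y, ξ⟫ : ℝ) : ℂ) - (t : ℂ) * ((‖ξ‖ ^ α : ℝ) : ℂ))) =
        Complex.exp (Complex.I * (((⟪x, ξ⟫ : ℝ) : ℂ) - (t : ℂ) * ((‖ξ‖ ^ α : ℝ) : ℂ))) *
        Complex.exp (-Complex.I * ((⟪y, ξ⟫ : ℝ) : ℂ)) := by
      rw [← Complex.exp_add, inner_sub_left]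
      congr 1
      push_cast
      ring
    simp only [hG]
    rw [this]
    ring
  have hR : ∀ y : R3, (∫ ξ : R3, Complex.exp (Complex.I * (((⟪x - y, ξ⟫ : ℝ) : ℂ) -
        (t : ℂ) * ((‖ξ‖ ^ α : ℝ) : ℂ))) * ((psiK φ₀ k ξ : ℝ) : ℂ)) * f y = ∫ ξ, G ξ y := by
    intro y
    rw [← integral_mul_const]
    simp only [hG, mul_assoc]
  rw [propPk, ← hc]
  simp only [hL, hR]
  rw [integral_const_mul, integral_integral_swap hG_int]
  ring

/-- For `α ∈ (1,2)` there is `C > 0`, depending only on `α` and the fixed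
Littlewood–Paley bump, such that for all `t > 0`, `k ∈ ℤ` and `f ∈ L¹(ℝ³)`,
`‖e^{-itD^α} P_k f‖_{L^∞} ≤ C t^{-3/2} 2^{3(1-α/2)k} ‖f‖_{L¹}`. -/
theorem stmt3 (α : ℝ) (hα : α ∈ Set.Ioo (1 : ℝ) 2) (φ₀ : ℝ → ℝ) (hφ₀ : IsLPBump φ₀) :
    ∃ C : ℝ, 0 < C ∧ ∀ t : ℝ, 0 < t → ∀ k : ℤ, ∀ f : R3 → ℂ,
      Integrable f (volume : Measure R3) →
      eLpNorm (propPk φ₀ α t k f) ∞ (volume : Measure R3) ≤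
        ENNReal.ofReal (C * t ^ (-(3 : ℝ) / 2) * (2 : ℝ) ^ ((3 * (1 - α / 2)) * (k : ℝ))) *
          eLpNorm f 1 (volume : Measure R3) := by
  obtain ⟨C, hC, hb⟩ := kernel_bound hα hφ₀
  set c : ℝ := (2 * π) ^ (-(3 : ℝ) / 2) with hc
  have hc0 : 0 < c := by positivity
  refine ⟨c ^ 2 * C, by positivity, fun t ht k f hf => ?_⟩
  set B : ℝ := C * t ^ (-(3 : ℝ) / 2) * (2 : ℝ) ^ ((3 * (1 - α / 2)) * (k : ℝ)) with hB
  have hB0 : 0 ≤ B := by positivity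
  have hpt : ∀ x : R3, ‖propPk φ₀ α t k f x‖ ≤ c ^ 2 * B * ∫ y, ‖f y‖ := by
    intro x
    rw [propPk_eq (by linarith [hα.1]) hφ₀ t k hf, norm_mul, norm_pow, Complex.norm_real,
      ← hc, Real.norm_eq_abs, abs_of_pos hc0, mul_assoc]
    gcongr
    rw [← integral_const_mul]
    refine norm_integral_le_of_norm_le (hf.norm.const_mul B) (Filter.Eventually.of_forall fun y => ?_)
    rw [norm_mul]
    gcongr
    exact hb t k (x - y) ht
  rw [eLpNorm_exponent_top]
  refine (eLpNormEssSup_le_of_ae_bound (Filter.Eventually.of_forall hpt)).trans ?_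
  rw [ENNReal.ofReal_mul (by positivity), eLpNorm_one_eq_lintegral_enorm,
    ofReal_integral_norm_eq_lintegral_enorm hf, hB]
  rw [show c ^ 2 * C * t ^ (-(3 : ℝ) / 2) * (2 : ℝ) ^ ((3 * (1 - α / 2)) * (k : ℝ)) =
    c ^ 2 * (C * t ^ (-(3 : ℝ) / 2) * (2 : ℝ) ^ ((3 * (1 - α / 2)) * (k : ℝ))) by ring]

end
end

section
/- Let α ∈ (1,2). There exist constants 0 < c ≤ C, depending only on α, such that for all k, k₁, k₂ ∈ ℤ with |k₁ − k₂| ≤ 10 and k₁ ≥ k − 10, and all (ξ,η) ∈ Ω_{k,k₁,k₂}, the following hold, where ∇_ξφ(ξ,η) = α|ξ|^{α−2}ξ − α|ξ−η|^{α−2}(ξ−η) and ∇_ηφ(ξ,η) = α|η|^{α−2}η + α|ξ−η|^{α−2}(ξ−η) are the gradients of the phase φ(ξ,η) = |ξ|^α − |ξ−η|^α + |η|^α in ξ and in η: (i) c·2^{(α−1)k₁} ≤ |∇_ξφ(ξ,η)| ≤ C·2^{(α−1)k₁}; (ii) c·2^{k + (α−2)k₁} ≤ |∇_ηφ(ξ,η)|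 ≤ C·2^{k + (α−2)k₁}; (iii) |⟨ξ/|ξ|, ∇_ηφ(ξ,η)⟩| ≥ c·|∇_ηφ(ξ,η)|. -/
/-!
Up to the factor `α`, both gradients are differences `F(a) - F(b)` of the field `F(x) = |x|^{α-2}x`:
`∇_ξφ` has `a = ξ`, `b = ξ - η`, `a - b = η`, and `∇_ηφ` has `a = η`, `b = η - ξ`, `a - b = ξ`.
The theorem rests on two facts about `F`.

* Strong monotonicity (`strong_mono`): if `|a|, |b| ≤ M`, then
  `⟪a - b, F(a) - F(b)⟫ ≥ (α-1) M^{α-2} |a-b|²`.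
* Lipschitz bound away from the origin (`lipschitz_away`): if `|a|, |b| ≥ m > 0`, then
  `|F(a) - F(b)| ≤ 3 m^{α-2} |a-b|`.

Both reduce to the tangent line inequality for the concave function `x ↦ x^{α-1}`. On the dyadic
region `|η|` and `|ξ - η|` are comparable to `2^{k₁}` and `|ξ| ≲ 2^{k₁}`, so the first fact gives
the lower bounds for both gradients, the second gives the upper bound for `∇_ηφ`, and together they
give the angular bound. The upper bound for `∇_ξφ` is the triangle inequality, as
`|F(x)| = |x|^{α-1}`.
-/

open scoped RealInnerProductSpace

noncomputable section

/-- The `ξ`-gradient of the phase `φ(ξ,η) = |ξ|^α − |ξ−η|^α + |η|^α`: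
`∇_ξφ(ξ,η) = α|ξ|^{α−2}ξ − α|ξ−η|^{α−2}(ξ−η)`. -/
def gradXiPhase (α : ℝ) (ξ η : R3) : R3 :=
  (α * ‖ξ‖ ^ (α - 2)) • ξ - (α * ‖ξ - η‖ ^ (α - 2)) • (ξ - η)

/-- The `η`-gradient of the phase:
`∇_ηφ(ξ,η) = α|η|^{α−2}η + α|ξ−η|^{α−2}(ξ−η)`. -/
def gradEtaPhase (α : ℝ) (ξ η : R3) : R3 :=
  (α * ‖η‖ ^ (α - 2)) • η + (α * ‖ξ - η‖ ^ (α - 2)) • (ξ - η)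

/-- The dyadic region `Ω_{k,k₁,k₂}`. -/
def OmegaReg (k k₁ k₂ : ℤ) (ξ η : R3) : Prop :=
  ‖ξ‖ ∈ Set.Ioo ((2 : ℝ) ^ (k - 1)) ((2 : ℝ) ^ (k + 1)) ∧
    ‖ξ - η‖ ∈ Set.Ioo ((2 : ℝ) ^ (k₁ - 1)) ((2 : ℝ) ^ (k₁ + 1)) ∧
      ‖η‖ ∈ Set.Ioo ((2 : ℝ) ^ (k₂ - 1)) ((2 : ℝ) ^ (k₂ + 1))

/-! ### Monotonicity and Lipschitz estimates for the field `|x|^{α-2}x` -/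

section Field

variable {E : Type*} [NormedAddCommGroup E] [InnerProductSpace ℝ E]

/-- The field `F(x) = |x|^{α-2}x`, which is `α⁻¹` times the gradient of `|x|^α`. -/
def powField (α : ℝ) (x : E) : E := ‖x‖ ^ (α - 2) • x

/-- Concavity of `x ↦ x ^ (α - 1)`: the graph lies below its tangent line at `x`. -/
lemma rpow_le_tangent {α x y : ℝ} (h1 : 1 < α) (h2 : α < 2) (hx : 0 < x) (hy : 0 < y) :
    y ^ (α - 1) ≤ x ^ (α - 1) + (α - 1) * x ^ (α - 2) * (y - x) := by
  have hb := rpow_one_add_le_one_add_mul_self (s := y / x - 1) (p := α - 1)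
    (by linarith [div_pos hy hx]) (by linarith) (by linarith)
  rw [add_sub_cancel, Real.div_rpow hy.le hx.le] at hb
  have hxp : 0 < x ^ (α - 1) := by positivity
  rw [div_le_iff₀ hxp] at hb
  have e : x ^ (α - 1) = x ^ (α - 2) * x := by
    rw [← Real.rpow_add_one hx.ne']; congr 1; ring
  calc _ ≤ _ := hb
    _ = _ := by rw [e]; field_simp

lemma rpow_mul_self_aux {α x : ℝ} (hx : 0 < x) : x ^ (α - 2) * x = x ^ (α - 1) := by
  rw [← Real.rpow_add_one hx.ne']; congr 1; ring

lemma norm_powField {α : ℝ} {x : E} (hx : 0 < ‖x‖) : ‖powField α x‖ = ‖x‖ ^ (α - 1) := by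
  rw [powField, norm_smul, Real.norm_of_nonneg (by positivity), rpow_mul_self_aux hx]

lemma scalar_mono {α s t M : ℝ} (h1 : 1 < α) (h2 : α < 2) (hs : 0 < s) (ht : 0 < t)
    (hsM : s ≤ M) (htM : t ≤ M) :
    (α - 1) * M ^ (α - 2) * (s - t) ^ 2 ≤ (s ^ (α - 1) - t ^ (α - 1)) * (s - t) := by
  wlog h : t ≤ s generalizing s t
  · have := this ht hs htM hsM (by linarith)
    linarith
  have hT := rpow_le_tangent h1 h2 hs ht
  have hM : M ^ (α - 2) ≤ s ^ (α - 2) := Real.rpow_le_rpow_of_nonpos hs hsM (by linarith)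
  have h3 : (α - 1) * M ^ (α - 2) * (s - t) ≤ (α - 1) * s ^ (α - 2) * (s - t) := by
    gcongr
  calc _ = ((α - 1) * M ^ (α - 2) * (s - t)) * (s - t) := by ring
    _ ≤ _ := by
      apply mul_le_mul_of_nonneg_right _ (by linarith)
      linarith

lemma scalar_lipschitz {α s t m : ℝ} (h1 : 1 < α) (h2 : α < 2) (hm : 0 < m)
    (hs : m ≤ s) (ht : m ≤ t) :
    |s ^ (α - 1) - t ^ (α - 1)| ≤ m ^ (α - 2) * |s - t| := by
  wlog h : t ≤ s generalizing s t
  · rw [abs_sub_comm, abs_sub_comm s]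
    exact this ht hs (by linarith)
  have hT := rpow_le_tangent h1 h2 (hm.trans_le ht) (hm.trans_le hs)
  have hM : t ^ (α - 2) ≤ m ^ (α - 2) := Real.rpow_le_rpow_of_nonpos hm ht (by linarith)
  have ht0 : 0 < t := hm.trans_le ht
  have hmono : t ^ (α - 1) ≤ s ^ (α - 1) := Real.rpow_le_rpow ht0.le h (by linarith)
  rw [abs_of_nonneg (by linarith), abs_of_nonneg (by linarith)]
  have h3 : (α - 1) * t ^ (α - 2) * (s - t) ≤ 1 * m ^ (α - 2) * (s - t) := by
    gcongr
    linarith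
  linarith

/-- Strong monotonicity of `F` on the ball of radius `M`; this uses `α < 2`, so that `M ^ (α - 2)` is
the smallest of the weights involved. -/
lemma strong_mono {α M : ℝ} {a b : E} (h1 : 1 < α) (h2 : α < 2) (ha : 0 < ‖a‖) (hb : 0 < ‖b‖)
    (haM : ‖a‖ ≤ M) (hbM : ‖b‖ ≤ M) :
    (α - 1) * M ^ (α - 2) * ‖a - b‖ ^ 2 ≤ ⟪a - b, powField α a - powField α b⟫ := by
  have hS := scalar_mono h1 h2 ha hb haM hbM
  have hsM : M ^ (α - 2) ≤ ‖a‖ ^ (α - 2) := Real.rpow_le_rpow_of_nonpos ha haM (by linarith)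
  have htM : M ^ (α - 2) ≤ ‖b‖ ^ (α - 2) := Real.rpow_le_rpow_of_nonpos hb hbM (by linarith)
  have hM0 : 0 < M ^ (α - 2) := Real.rpow_pos_of_pos (ha.trans_le haM) _
  have hp : 0 ≤ ‖a‖ * ‖b‖ - ⟪a, b⟫ := by linarith [real_inner_le_norm a b]
  -- The radial and angular parts of `a - b` separate in both sides of the inequality.
  have e1 : ‖a - b‖ ^ 2 = (‖a‖ - ‖b‖) ^ 2 + 2 * (‖a‖ * ‖b‖ - ⟪a, b⟫) := by
    rw [norm_sub_sq_real]; ring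
  have e2 : ⟪a - b, powField α a - powField α b⟫ =
      (‖a‖ ^ (α - 1) - ‖b‖ ^ (α - 1)) * (‖a‖ - ‖b‖) +
        (‖a‖ ^ (α - 2) + ‖b‖ ^ (α - 2)) * (‖a‖ * ‖b‖ - ⟪a, b⟫) := by
    simp only [powField, inner_sub_left, inner_sub_right, real_inner_smul_right,
      real_inner_self_eq_norm_sq, real_inner_comm a b]
    rw [← rpow_mul_self_aux ha, ← rpow_mul_self_aux hb]
    ring
  rw [e1, e2, mul_add]
  refine add_le_add hS ?_
  rw [← mul_assoc]
  apply mul_le_mul_of_nonneg_right _ hp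
  nlinarith

/-- `F` is Lipschitz away from the origin, with the constant that its homogeneity of degree `α - 1`
dictates. -/
lemma lipschitz_away {α m : ℝ} {a b : E} (h1 : 1 < α) (h2 : α < 2) (hm : 0 < m)
    (ha : m ≤ ‖a‖) (hb : m ≤ ‖b‖) :
    ‖powField α a - powField α b‖ ≤ 3 * m ^ (α - 2) * ‖a - b‖ := by
  have ha0 : 0 < ‖a‖ := hm.trans_le ha
  have hb0 : 0 < ‖b‖ := hm.trans_le hb
  have hM : ‖a‖ ^ (α - 2) ≤ m ^ (α - 2) := Real.rpow_le_rpow_of_nonpos hm ha (by linarith)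
  have hS := scalar_lipschitz h1 h2 hm ha hb
  have hab : |‖a‖ - ‖b‖| ≤ ‖a - b‖ := abs_norm_sub_norm_le a b
  have e : powField α a - powField α b =
      ‖a‖ ^ (α - 2) • (a - b) + (‖a‖ ^ (α - 2) - ‖b‖ ^ (α - 2)) • b := by
    simp only [powField]; module
  have e2 : (‖a‖ ^ (α - 2) - ‖b‖ ^ (α - 2)) * ‖b‖ =
      (‖a‖ ^ (α - 1) - ‖b‖ ^ (α - 1)) - ‖a‖ ^ (α - 2) * (‖a‖ - ‖b‖) := by
    rw [← rpow_mul_self_aux ha0, ← rpow_mul_self_aux hb0]; ring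
  have n2 : ‖(‖a‖ ^ (α - 2) - ‖b‖ ^ (α - 2)) • b‖ ≤ 2 * (m ^ (α - 2) * ‖a - b‖) := by
    calc _ = |(‖a‖ ^ (α - 2) - ‖b‖ ^ (α - 2)) * ‖b‖| := by
          rw [norm_smul, abs_mul, abs_norm, Real.norm_eq_abs]
      _ ≤ |‖a‖ ^ (α - 1) - ‖b‖ ^ (α - 1)| + |‖a‖ ^ (α - 2) * (‖a‖ - ‖b‖)| := by
          rw [e2]; exact abs_sub _ _
      _ ≤ m ^ (α - 2) * ‖a - b‖ + m ^ (α - 2) * ‖a - b‖ := by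
          refine add_le_add (hS.trans (by gcongr)) ?_
          rw [abs_mul, abs_of_pos (Real.rpow_pos_of_pos ha0 _)]
          gcongr
      _ = _ := by ring
  have n1 : ‖‖a‖ ^ (α - 2) • (a - b)‖ ≤ m ^ (α - 2) * ‖a - b‖ := by
    rw [norm_smul, Real.norm_of_nonneg (by positivity)]
    gcongr
  rw [e]
  linarith [norm_add_le (‖a‖ ^ (α - 2) • (a - b)) ((‖a‖ ^ (α - 2) - ‖b‖ ^ (α - 2)) • b)]

/-- Cauchy–Schwarz turns strong monotonicity into a lower bound for the difference. -/
lemma norm_sub_lower {α M : ℝ} {a b : E} (h1 : 1 < α) (h2 : α < 2) (ha : 0 < ‖a‖) (hb : 0 < ‖b‖)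
    (haM : ‖a‖ ≤ M) (hbM : ‖b‖ ≤ M) (hab : 0 < ‖a - b‖) :
    (α - 1) * M ^ (α - 2) * ‖a - b‖ ≤ ‖powField α a - powField α b‖ := by
  have h := (strong_mono h1 h2 ha hb haM hbM).trans (real_inner_le_norm _ _)
  refine le_of_mul_le_mul_left ?_ hab
  calc _ = (α - 1) * M ^ (α - 2) * ‖a - b‖ ^ 2 := by ring
    _ ≤ _ := h

end Field

/-! ### The phase gradients on the dyadic region -/

/-- For an exponent `p ∈ [-1, 1]`, rescaling by `2 ^ 11` changes a power by at most `2 ^ 11`. -/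
lemma two_pow_rpow_bounds {p : ℝ} (hp : -1 ≤ p) (hp' : p ≤ 1) :
    (2 ^ 11 : ℝ)⁻¹ ≤ (2 ^ 11 : ℝ) ^ p ∧ (2 ^ 11 : ℝ) ^ p ≤ 2 ^ 11 := by
  constructor
  · rw [← Real.rpow_neg_one]
    exact Real.rpow_le_rpow_of_exponent_le (by norm_num) hp
  · calc (2 ^ 11 : ℝ) ^ p ≤ (2 ^ 11 : ℝ) ^ (1 : ℝ) :=
        Real.rpow_le_rpow_of_exponent_le (by norm_num) hp'
      _ = _ := Real.rpow_one _

lemma gradXi_eq (α : ℝ) (ξ η : R3) :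
    gradXiPhase α ξ η = α • (powField α ξ - powField α (ξ - η)) := by
  simp only [gradXiPhase, powField]; module

/-- `F` is odd, so the sum defining `∇_ηφ` is a difference of values of `F` at points differing
by `ξ`. -/
lemma gradEta_eq (α : ℝ) (ξ η : R3) :
    gradEtaPhase α ξ η = α • (powField α η - powField α (η - ξ)) := by
  simp only [gradEtaPhase, powField, norm_sub_rev η ξ]; module

/-- On the dyadic region `|ξ|` is comparable to `2^k` and at most a constant times `2^{k₁}`, and both
`|ξ - η|` and `|η|` are comparable to `2^{k₁}`. -/
lemma omega_sizes {k k₁ k₂ : ℤ} {ξ η : R3} (h12 : |k₁ - k₂| ≤ 10) (hk : k - 10 ≤ k₁)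
    (h : OmegaReg k k₁ k₂ ξ η) :
    ((2 : ℝ) ^ k / 2 ≤ ‖ξ‖ ∧ ‖ξ‖ ≤ 2 * (2 : ℝ) ^ k ∧ ‖ξ‖ ≤ 2 ^ 11 * (2 : ℝ) ^ k₁) ∧
    ((2 ^ 11)⁻¹ * (2 : ℝ) ^ k₁ ≤ ‖ξ - η‖ ∧ ‖ξ - η‖ ≤ 2 ^ 11 * (2 : ℝ) ^ k₁) ∧
    ((2 ^ 11)⁻¹ * (2 : ℝ) ^ k₁ ≤ ‖η‖ ∧ ‖η‖ ≤ 2 ^ 11 * (2 : ℝ) ^ k₁) := by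
  obtain ⟨⟨a1, a2⟩, ⟨b1, b2⟩, c1, c2⟩ := h
  rw [abs_le] at h12
  have up : ∀ j : ℤ, j ≤ k₁ + 11 → (2 : ℝ) ^ j ≤ 2 ^ 11 * 2 ^ k₁ := fun j hj => by
    calc (2 : ℝ) ^ j ≤ 2 ^ (k₁ + 11) := zpow_le_zpow_right₀ (by norm_num) hj
      _ = _ := by rw [zpow_add₀ (by norm_num), mul_comm]; norm_num
  have lo : ∀ j : ℤ, k₁ - 11 ≤ j → (2 ^ 11)⁻¹ * (2 : ℝ) ^ k₁ ≤ 2 ^ j := fun j hj => by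
    calc _ = (2 : ℝ) ^ (k₁ - 11) := by
          rw [zpow_sub₀ (by norm_num), div_eq_mul_inv, mul_comm]; norm_num
      _ ≤ _ := zpow_le_zpow_right₀ (by norm_num) hj
  have e1 : (2 : ℝ) ^ (k - 1) = 2 ^ k / 2 := by rw [zpow_sub_one₀ (by norm_num)]; rfl
  have e2 : (2 : ℝ) ^ (k + 1) = 2 * 2 ^ k := by rw [zpow_add_one₀ (by norm_num), mul_comm]
  exact ⟨⟨e1 ▸ a1.le, e2 ▸ a2.le, a2.le.trans (up _ (by lia))⟩,
    ⟨(lo _ (by lia)).trans b1.le, b2.le.trans (up _ (by lia))⟩,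
    ⟨(lo _ (by lia)).trans c1.le, c2.le.trans (up _ (by lia))⟩⟩

/-- (High×high interactions.) For `α ∈ (1,2)` there are `0 < c ≤ C`,
depending only on `α`, such that for all `k, k₁, k₂ ∈ ℤ` with `|k₁ − k₂| ≤ 10`, `k₁ ≥ k − 10`
and all `(ξ,η) ∈ Ω_{k,k₁,k₂}`:
`|∇_ξφ| ∼ 2^{(α−1)k₁}`, `|∇_ηφ| ∼ 2^{k+(α−2)k₁}`, and
`|⟨ξ/|ξ|, ∇_ηφ⟩| ≥ c|∇_ηφ|`. -/
theorem stmt11 (α : ℝ) (hα : α ∈ Set.Ioo (1 : ℝ) 2) :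
    ∃ c C : ℝ, 0 < c ∧ c ≤ C ∧
      ∀ k k₁ k₂ : ℤ, |k₁ - k₂| ≤ 10 → k - 10 ≤ k₁ →
        ∀ ξ η : R3, OmegaReg k k₁ k₂ ξ η →
          (c * (2 : ℝ) ^ ((α - 1) * (k₁ : ℝ)) ≤ ‖gradXiPhase α ξ η‖ ∧
            ‖gradXiPhase α ξ η‖ ≤ C * (2 : ℝ) ^ ((α - 1) * (k₁ : ℝ))) ∧
          (c * (2 : ℝ) ^ ((k : ℝ) + (α - 2) * (k₁ : ℝ)) ≤ ‖gradEtaPhase α ξ η‖ ∧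
            ‖gradEtaPhase α ξ η‖ ≤ C * (2 : ℝ) ^ ((k : ℝ) + (α - 2) * (k₁ : ℝ))) ∧
          c * ‖gradEtaPhase α ξ η‖ ≤ |(⟪‖ξ‖⁻¹ • ξ, gradEtaPhase α ξ η⟫ : ℝ)| := by
  obtain ⟨h1, h2⟩ := hα
  refine ⟨(α - 1) * (2 ^ 24)⁻¹, 2 ^ 15, by nlinarith, by nlinarith, ?_⟩
  intro k k₁ k₂ h12 hk ξ η hΩ
  obtain ⟨⟨x1, x2, x3⟩, ⟨y1, y2⟩, z1, z2⟩ := omega_sizes h12 hk hΩ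
  have hα1 : 0 < α - 1 := by linarith
  have E1 : (2 : ℝ) ^ ((α - 1) * (k₁ : ℝ)) = ((2 : ℝ) ^ k₁) ^ (α - 1) := by
    rw [mul_comm, Real.rpow_mul (by norm_num), Real.rpow_intCast]
  have E2 : (2 : ℝ) ^ ((k : ℝ) + (α - 2) * (k₁ : ℝ)) = (2 : ℝ) ^ k * ((2 : ℝ) ^ k₁) ^ (α - 2) := by
    rw [Real.rpow_add (by norm_num), mul_comm (α - 2), Real.rpow_mul (by norm_num),
      Real.rpow_intCast, Real.rpow_intCast]
  rw [E1, E2]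
  have hK : (0 : ℝ) < 2 ^ k₁ := by positivity
  have hL : (0 : ℝ) < 2 ^ k := by positivity
  generalize (2 : ℝ) ^ k₁ = K at *
  generalize (2 : ℝ) ^ k = L at *
  have hx0 : 0 < ‖ξ‖ := by linarith
  have hm0 : 0 < (2 ^ 11)⁻¹ * K := by positivity
  have hy0 : 0 < ‖ξ - η‖ := by linarith
  have hz0 : 0 < ‖η‖ := by linarith
  have hE : K ^ (α - 2) * K = K ^ (α - 1) := rpow_mul_self_aux hK
  obtain ⟨P, hP⟩ : ∃ P, P = K ^ (α - 2) := ⟨_, rfl⟩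
  have hP0 : 0 < P := by rw [hP]; positivity
  -- Powers of the extreme sizes `2 ^ 11 * K` and `(2 ^ 11)⁻¹ * K`, compared with powers of `K`.
  have M2 : (2 ^ 11)⁻¹ * P ≤ (2 ^ 11 * K) ^ (α - 2) := by
    rw [Real.mul_rpow (by norm_num) hK.le, hP]
    gcongr
    exact (two_pow_rpow_bounds (by linarith) (by linarith)).1
  have M1 : (2 ^ 11 * K) ^ (α - 1) ≤ 2 ^ 11 * (P * K) := by
    rw [Real.mul_rpow (by norm_num) hK.le, hP, hE]
    gcongr
    exact (two_pow_rpow_bounds (by linarith) (by linarith)).2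
  have m2 : ((2 ^ 11)⁻¹ * K) ^ (α - 2) ≤ 2 ^ 11 * P := by
    rw [Real.mul_rpow (by norm_num) hK.le, hP, Real.inv_rpow (by norm_num),
      ← Real.rpow_neg (by norm_num)]
    gcongr
    exact (two_pow_rpow_bounds (by linarith) (by linarith)).2
  rw [← hE, ← hP]
  have nα : ‖α‖ = α := Real.norm_of_nonneg (by linarith)
  have nXi : ‖gradXiPhase α ξ η‖ = α * ‖powField α ξ - powField α (ξ - η)‖ := by
    rw [gradXi_eq, norm_smul, nα]
  have nEta : ‖gradEtaPhase α ξ η‖ = α * ‖powField α η - powField α (η - ξ)‖ := by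
    rw [gradEta_eq, norm_smul, nα]
  have dXi : ξ - (ξ - η) = η := by abel
  have dEta : η - (η - ξ) = ξ := by abel
  have y1' := y1
  have y2' := y2
  have hy0' := hy0
  rw [norm_sub_rev] at y1' y2' hy0'
  have lowXi := norm_sub_lower h1 h2 hx0 hy0 x3 y2 (by rwa [dXi])
  rw [dXi] at lowXi
  have upXi : ‖powField α ξ - powField α (ξ - η)‖ ≤ 2 ^ 12 * (P * K) := by
    have a1 := norm_powField (α := α) hx0
    have a2 := norm_powField (α := α) hy0
    have b1 : ‖ξ‖ ^ (α - 1) ≤ (2 ^ 11 * K) ^ (α - 1) := by gcongr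
    have b2 : ‖ξ - η‖ ^ (α - 1) ≤ (2 ^ 11 * K) ^ (α - 1) := by gcongr
    linarith [norm_sub_le (powField α ξ) (powField α (ξ - η))]
  have lowXi' : (α - 1) * ((2 ^ 11)⁻¹ * P) * ((2 ^ 11)⁻¹ * K) ≤
      ‖powField α ξ - powField α (ξ - η)‖ := by
    refine le_trans ?_ lowXi
    gcongr
  have monEta := strong_mono h1 h2 hz0 hy0' z2 y2'
  have lowEta := norm_sub_lower h1 h2 hz0 hy0' z2 y2' (by rwa [dEta])
  have upEta := lipschitz_away h1 h2 hm0 z1 y1'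
  rw [dEta] at monEta lowEta upEta
  have upEta' : ‖powField α η - powField α (η - ξ)‖ ≤ 3 * (2 ^ 11 * P) * ‖ξ‖ :=
    upEta.trans (by gcongr)
  have lowEta' : (α - 1) * ((2 ^ 11)⁻¹ * P) * ‖ξ‖ ≤ ‖powField α η - powField α (η - ξ)‖ :=
    le_trans (by gcongr) lowEta
  have monEta' : (α - 1) * ((2 ^ 11)⁻¹ * P) * ‖ξ‖ ≤
      ‖ξ‖⁻¹ * ⟪ξ, powField α η - powField α (η - ξ)⟫ := by
    rw [le_inv_mul_iff₀ hx0]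
    refine le_trans ?_ monEta
    calc _ = (α - 1) * ((2 ^ 11)⁻¹ * P) * ‖ξ‖ ^ 2 := by ring
      _ ≤ _ := by gcongr
  have scale : ∀ x y : ℝ, 0 ≤ x → x ≤ y → x ≤ α * y := fun x y h0 h => by nlinarith
  have scale' : ∀ x y : ℝ, 0 ≤ y → x ≤ y → α * x ≤ 2 * y := fun x y h0 h => by nlinarith
  have hQ : 0 < (α - 1) * (P * K) := by positivity
  have hR : 0 < (α - 1) * (L * P) := by positivity
  have hS : (α - 1) * P * (L / 2) ≤ (α - 1) * P * ‖ξ‖ := by gcongr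
  have hT : P * ‖ξ‖ ≤ P * (2 * L) := by gcongr
  refine ⟨⟨?_, ?_⟩, ⟨?_, ?_⟩, ?_⟩
  · rw [nXi]
    exact scale _ _ (by positivity) (by linarith)
  · rw [nXi]
    have := scale' _ _ (by positivity) upXi
    have : 0 < P * K := by positivity
    linarith
  · rw [nEta]
    exact scale _ _ (by positivity) (by linarith)
  · rw [nEta]
    have := scale' _ _ (by positivity) upEta'
    have : 0 < P * L := by positivity
    linarith
  · rw [nEta, gradEta_eq, real_inner_smul_left, real_inner_smul_right]
    refine le_trans ?_ (le_abs_self _)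
    have hU : (α - 1) * ‖powField α η - powField α (η - ξ)‖ ≤
        (α - 1) * (3 * (2 ^ 11 * P) * ‖ξ‖) := by gcongr
    have hV : 0 < (α - 1) * P * ‖ξ‖ := by positivity
    have key : (α - 1) * (2 ^ 24)⁻¹ * ‖powField α η - powField α (η - ξ)‖ ≤
        ‖ξ‖⁻¹ * ⟪ξ, powField α η - powField α (η - ξ)⟫ := by linarith
    calc _ = α * ((α - 1) * (2 ^ 24)⁻¹ * ‖powField α η - powField α (η - ξ)‖) := by ring
      _ ≤ α * (‖ξ‖⁻¹ * ⟪ξ, powField α η - powField α (η - ξ)⟫) := by gcongr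
      _ = _ := by ring

end
end

section
/- Let α ∈ (1,2). There exist constants 0 < c ≤ C, depending only on α, such that for all k, k₁, k₂ ∈ ℤ with k₁ ≥ k₂ + 10 and |k₁ − k| ≤ 10, and all (ξ,η) ∈ Ω_{k,k₁,k₂}, the following hold, where ∇_ξφ(ξ,η) = α|ξ|^{α−2}ξ − α|ξ−η|^{α−2}(ξ−η) and ∇_ηφ(ξ,η) = α|η|^{α−2}η + α|ξ−η|^{α−2}(ξ−η) are the gradients of the phase φ(ξ,η) = |ξ|^α − |ξ−η|^α + |η|^α in ξ and in η: (i) c·2^{(α−2)k + k₂} ≤ |∇_ξφ(ξ,η)| ≤ C·2^{(α−2)k + k₂}; (ii) c·2^{(α−1)k} ≤ |∇_ηφ(ξ,η)| ≤ C·2^{(α−1)k}; (iii) |⟨ξ/|ξ|, ∇_ηφ(ξ,η)⟩| ≥ c·|∇_ηφ(ξ,η)|. -/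
/-!
Write `x = ξ`, `y = ξ - η`, `z = η`, so that `x = y + z` and `|z| ≤ |y| / 256`; hence `|x|` and `|y|`
are both comparable to `2^k`.

* `ξ`-gradient. The map `v ↦ |v|^(α-2) v` is bi-Lipschitz at each scale. If `|a| ≤ |b|`, then
  `|a|^(α-2) a - |b|^(α-2) b = |b|^(α-2) (a - b) + (|a|^(α-2) - |b|^(α-2)) a`, and Bernoulli's
  inequality for the exponent `2 - α ∈ (0,1)` bounds the last term by
  `(2 - α) |b|^(α-2) |a - b|`. The loss is a factor `1 - (2 - α) = α - 1 > 0`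
  (`norm_rpow_smul_sub_bounds`).
* `η`-gradient. The two summands have norms `α |z|^(α-1)` and `α |y|^(α-1)`, and
  `|z|^(α-1) ≤ q |y|^(α-1)` with `q = 256^(-(α-1)) < 1`.
* Angle. Since `x = y + z`, expanding the inner product and applying Cauchy-Schwarz to `⟪y, z⟫` gives
  `⟪x, |z|^(α-2) z + |y|^(α-2) y⟫ ≥ (|y| - |z|) (|y|^(α-1) - |z|^(α-1))` (`le_inner_add`). This
  factorised form matters: estimating the two summands separately fails for `α` close to `1`, where
  `q` is close to `1`.
-/

open scoped RealInnerProductSpace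

noncomputable section

lemma rpow_sub_two_mul_self {s : ℝ} (hs : 0 < s) (α : ℝ) :
    s ^ (α - 2) * s = s ^ (α - 1) := by
  rw [← Real.rpow_add_one hs.ne']; congr 1; ring

/-- Bernoulli's inequality for the exponent `2 - α ∈ (0,1)`, applied to `B / A ≥ 1`. -/
lemma rpow_sub_rpow_mul_le {α A B : ℝ} (hα : α ∈ Set.Ioo (1 : ℝ) 2) (hA : 0 < A) (hAB : A ≤ B) :
    (A ^ (α - 2) - B ^ (α - 2)) * A ≤ (2 - α) * B ^ (α - 2) * (B - A) := by
  obtain ⟨h1, h2⟩ := hα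
  have hB : 0 < B := hA.trans_le hAB
  have e : A ^ (α - 2) = B ^ (α - 2) * (B / A) ^ (2 - α) := by
    rw [Real.div_rpow hB.le hA.le, show (2 - α) = -(α - 2) by ring, Real.rpow_neg hB.le,
      Real.rpow_neg hA.le]
    have := (Real.rpow_pos_of_pos hB (α - 2)).ne'
    field_simp
  have hb : (B / A) ^ (2 - α) ≤ 1 + (2 - α) * (B / A - 1) := by
    have h := rpow_one_add_le_one_add_mul_self (s := B / A - 1) (p := 2 - α)
      (by linarith [div_pos hB hA]) (by linarith) (by linarith)
    rwa [add_sub_cancel] at h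
  have hP := Real.rpow_pos_of_pos hB (α - 2)
  rw [e]
  have h3 : (B / A) ^ (2 - α) * A ≤ (1 + (2 - α) * (B / A - 1)) * A := by gcongr
  have h4 : (1 + (2 - α) * (B / A - 1)) * A = A + (2 - α) * (B - A) := by field_simp
  nlinarith

/-- The map `v ↦ |v|^(α-2) v` is bi-Lipschitz, with constants comparable to the weight
`|b|^(α-2)` of the longer of the two vectors. -/
lemma norm_rpow_smul_sub_bounds {α : ℝ} (hα : α ∈ Set.Ioo (1 : ℝ) 2) {a b : R3}
    (ha : 0 < ‖a‖) (hab : ‖a‖ ≤ ‖b‖) :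
    (α - 1) * ‖b‖ ^ (α - 2) * ‖a - b‖ ≤ ‖‖a‖ ^ (α - 2) • a - ‖b‖ ^ (α - 2) • b‖ ∧
      ‖‖a‖ ^ (α - 2) • a - ‖b‖ ^ (α - 2) • b‖ ≤ 2 * ‖b‖ ^ (α - 2) * ‖a - b‖ := by
  have key := rpow_sub_rpow_mul_le hα ha hab
  obtain ⟨h1, h2⟩ := hα
  have hb : 0 < ‖b‖ := ha.trans_le hab
  have hP := Real.rpow_pos_of_pos hb (α - 2)
  have hmono : ‖b‖ ^ (α - 2) ≤ ‖a‖ ^ (α - 2) :=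
    Real.rpow_le_rpow_of_nonpos ha hab (by linarith)
  have hd : ‖b‖ - ‖a‖ ≤ ‖a - b‖ := by
    rw [norm_sub_rev]; exact norm_sub_norm_le b a
  have e : ‖a‖ ^ (α - 2) • a - ‖b‖ ^ (α - 2) • b
      = ‖b‖ ^ (α - 2) • (a - b) + (‖a‖ ^ (α - 2) - ‖b‖ ^ (α - 2)) • a := by module
  have n1 : ‖‖b‖ ^ (α - 2) • (a - b)‖ = ‖b‖ ^ (α - 2) * ‖a - b‖ := by
    rw [norm_smul, Real.norm_of_nonneg hP.le]
  have n2 : ‖(‖a‖ ^ (α - 2) - ‖b‖ ^ (α - 2)) • a‖ ≤ (2 - α) * (‖b‖ ^ (α - 2) * ‖a - b‖) := by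
    rw [norm_smul, Real.norm_of_nonneg (by linarith)]
    refine key.trans ?_
    rw [mul_assoc]
    gcongr
  have hQ : 0 ≤ ‖b‖ ^ (α - 2) * ‖a - b‖ := by positivity
  rw [e]
  constructor
  · have := norm_sub_le_norm_add (‖b‖ ^ (α - 2) • (a - b))
      ((‖a‖ ^ (α - 2) - ‖b‖ ^ (α - 2)) • a)
    nlinarith
  · have := norm_add_le (‖b‖ ^ (α - 2) • (a - b))
      ((‖a‖ ^ (α - 2) - ‖b‖ ^ (α - 2)) • a)
    nlinarith

/-- By Cauchy-Schwarz for `⟪y, z⟫`; equality holds when `z` is antiparallel to `y`. -/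
lemma le_inner_add {α : ℝ} {y z : R3} (hy : 0 < ‖y‖) (hz : 0 < ‖z‖) :
    (‖y‖ - ‖z‖) * (‖y‖ ^ (α - 1) - ‖z‖ ^ (α - 1)) ≤
      (⟪y + z, ‖z‖ ^ (α - 2) • z + ‖y‖ ^ (α - 2) • y⟫ : ℝ) := by
  have hY := Real.rpow_pos_of_pos hy (α - 2)
  have hZ := Real.rpow_pos_of_pos hz (α - 2)
  rw [← rpow_sub_two_mul_self hy, ← rpow_sub_two_mul_self hz]
  have hcs : -(‖y‖ * ‖z‖) ≤ (⟪y, z⟫ : ℝ) := by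
    have := abs_le.1 (abs_real_inner_le_norm y z)
    exact this.1
  simp only [inner_add_left, inner_add_right, real_inner_smul_right, real_inner_self_eq_norm_sq,
    real_inner_comm y z]
  nlinarith

/-- Comparison of a negative power `M^(α-2)` with `K^(α-2)` when `K / 2 ≤ M ≤ 4 K`. -/
lemma rpow_sub_two_comparable {α K M : ℝ} (hα : α ∈ Set.Ioo (1 : ℝ) 2) (hK : 0 < K)
    (h1 : K / 2 ≤ M) (h2 : M ≤ 4 * K) :
    K ^ (α - 2) / 4 ≤ M ^ (α - 2) ∧ M ^ (α - 2) ≤ 2 * K ^ (α - 2) := by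
  obtain ⟨a1, a2⟩ := hα
  have hP := Real.rpow_pos_of_pos hK (α - 2)
  have hM : 0 < M := by linarith
  constructor
  · have h := Real.rpow_le_rpow_of_nonpos hM h2 (z := α - 2) (by linarith)
    rw [Real.mul_rpow (by norm_num) hK.le] at h
    have h4 : (4 : ℝ) ^ (-1 : ℝ) ≤ 4 ^ (α - 2) :=
      Real.rpow_le_rpow_of_exponent_le (by norm_num) (by linarith)
    rw [Real.rpow_neg_one] at h4
    nlinarith
  · have h := Real.rpow_le_rpow_of_nonpos (by positivity) h1 (z := α - 2) (by linarith)
    rw [Real.div_rpow hK.le (by norm_num)] at h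
    have h4 : (2 : ℝ) ^ (-1 : ℝ) ≤ 2 ^ (α - 2) :=
      Real.rpow_le_rpow_of_exponent_le (by norm_num) (by linarith)
    rw [Real.rpow_neg_one] at h4
    refine h.trans ?_
    rw [div_le_iff₀ (by positivity)]
    nlinarith

/-- Comparison of the power `M^(α-1)` with `K^(α-1)` when `K / 4 ≤ M ≤ 4 K`. -/
lemma rpow_sub_one_comparable {α K M : ℝ} (hα : α ∈ Set.Ioo (1 : ℝ) 2) (hK : 0 < K)
    (h1 : K / 4 ≤ M) (h2 : M ≤ 4 * K) :
    K ^ (α - 1) / 4 ≤ M ^ (α - 1) ∧ M ^ (α - 1) ≤ 4 * K ^ (α - 1) := by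
  obtain ⟨a1, a2⟩ := hα
  have hP := Real.rpow_pos_of_pos hK (α - 1)
  have hM : 0 < M := by linarith
  have h4 : (4 : ℝ) ^ (α - 1) ≤ 4 := by
    have : (4 : ℝ) ^ (α - 1) ≤ 4 ^ (1 : ℝ) :=
      Real.rpow_le_rpow_of_exponent_le (by norm_num) (by linarith)
    rwa [Real.rpow_one] at this
  constructor
  · have h := Real.rpow_le_rpow (by positivity) h1 (z := α - 1) (by linarith)
    rw [Real.div_rpow hK.le (by norm_num)] at h
    refine le_trans ?_ h
    gcongr
  · have h := Real.rpow_le_rpow hM.le h2 (z := α - 1) (by linarith)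
    rw [Real.mul_rpow (by norm_num) hK.le] at h
    nlinarith

lemma two_rpow_mul_intCast (x : ℝ) (k : ℤ) :
    (2 : ℝ) ^ (x * (k : ℝ)) = ((2 : ℝ) ^ k) ^ x := by
  rw [mul_comm, Real.rpow_mul (by norm_num), Real.rpow_intCast]

/-- The size relations implied by `Ω_{k,k₁,k₂}` and `k₁ ≥ k₂ + 10`, with `K = 2^k`, `L = 2^k₂`. -/
lemma OmegaReg.sizes {k k₁ k₂ : ℤ} (h : k₂ + 10 ≤ k₁) {ξ η : R3} (hO : OmegaReg k k₁ k₂ ξ η) :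
    ((2 : ℝ) ^ k / 2 < ‖ξ‖ ∧ ‖ξ‖ < 2 * (2 : ℝ) ^ k) ∧
      ((2 : ℝ) ^ k₂ / 2 < ‖η‖ ∧ ‖η‖ < 2 * (2 : ℝ) ^ k₂) ∧ 256 * ‖η‖ ≤ ‖ξ - η‖ := by
  obtain ⟨⟨a1, a2⟩, ⟨b1, b2⟩, ⟨c1, c2⟩⟩ := hO
  have hle : (2 : ℝ) ^ (k₂ + 10) ≤ 2 ^ k₁ := zpow_le_zpow_right₀ (by norm_num) h
  rw [zpow_add₀ (by norm_num)] at hle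
  rw [zpow_sub_one₀ (by norm_num)] at a1 b1 c1
  rw [zpow_add_one₀ (by norm_num)] at a2 b2 c2
  norm_num at hle
  refine ⟨⟨by linarith, by linarith⟩, ⟨by linarith, by linarith⟩, by linarith⟩

lemma gradXiPhase_bounds {α K L : ℝ} (hα : α ∈ Set.Ioo (1 : ℝ) 2) (hK : 0 < K) (hL : 0 < L)
    {ξ η : R3} (hx1 : K / 2 < ‖ξ‖) (hx2 : ‖ξ‖ < 2 * K) (hz1 : L / 2 < ‖η‖) (hz2 : ‖η‖ < 2 * L)
    (hzy : 256 * ‖η‖ ≤ ‖ξ - η‖) :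
    α * (α - 1) / 8 * (K ^ (α - 2) * L) ≤ ‖gradXiPhase α ξ η‖ ∧
      ‖gradXiPhase α ξ η‖ ≤ 8 * α * (K ^ (α - 2) * L) := by
  have hα' := hα
  obtain ⟨h1, h2⟩ := hα'
  have hP := Real.rpow_pos_of_pos hK (α - 2)
  have hyx : ‖ξ - η‖ ≤ ‖ξ‖ + ‖η‖ := norm_sub_le _ _
  have e : gradXiPhase α ξ η
      = α • (‖ξ‖ ^ (α - 2) • ξ - ‖ξ - η‖ ^ (α - 2) • (ξ - η)) := by
    unfold gradXiPhase; module
  -- The longer of `ξ` and `ξ - η` supplies the weight `M^(α-2)`.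
  obtain ⟨M, hM1, hM2, hlo, hhi⟩ : ∃ M : ℝ, K / 2 ≤ M ∧ M ≤ 4 * K ∧
      (α - 1) * M ^ (α - 2) * ‖η‖ ≤ ‖‖ξ‖ ^ (α - 2) • ξ - ‖ξ - η‖ ^ (α - 2) • (ξ - η)‖ ∧
      ‖‖ξ‖ ^ (α - 2) • ξ - ‖ξ - η‖ ^ (α - 2) • (ξ - η)‖ ≤ 2 * M ^ (α - 2) * ‖η‖ := by
    rcases le_total ‖ξ‖ ‖ξ - η‖ with hc | hc
    · have := norm_rpow_smul_sub_bounds hα (by linarith) hc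
      rw [sub_sub_cancel] at this
      exact ⟨‖ξ - η‖, by linarith, by linarith, this⟩
    · have := norm_rpow_smul_sub_bounds hα (by linarith) hc
      rw [norm_sub_rev (_ • (ξ - η)), norm_sub_rev (ξ - η), sub_sub_cancel] at this
      exact ⟨‖ξ‖, by linarith, by linarith, this⟩
  obtain ⟨p1, p2⟩ := rpow_sub_two_comparable hα hK hM1 hM2
  have hM : 0 ≤ M ^ (α - 2) := by linarith
  have q1 : K ^ (α - 2) / 4 * (L / 2) ≤ M ^ (α - 2) * ‖η‖ := by gcongr
  have q2 : M ^ (α - 2) * ‖η‖ ≤ 2 * K ^ (α - 2) * (2 * L) := by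
    gcongr
  rw [e, norm_smul, Real.norm_of_nonneg (by linarith)]
  constructor
  · calc α * (α - 1) / 8 * (K ^ (α - 2) * L)
        = α * ((α - 1) * (K ^ (α - 2) / 4 * (L / 2))) := by ring
      _ ≤ α * ((α - 1) * (M ^ (α - 2) * ‖η‖)) := by
        have : 0 ≤ α - 1 := by linarith
        gcongr
      _ = α * ((α - 1) * M ^ (α - 2) * ‖η‖) := by ring
      _ ≤ _ := by gcongr
  · calc _ ≤ α * (2 * M ^ (α - 2) * ‖η‖) := by gcongr
      _ = α * (2 * (M ^ (α - 2) * ‖η‖)) := by ring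
      _ ≤ α * (2 * (2 * K ^ (α - 2) * (2 * L))) := by gcongr
      _ = _ := by ring

lemma norm_rpow_sub_two_smul {α : ℝ} {v : R3} (hv : 0 < ‖v‖) :
    ‖‖v‖ ^ (α - 2) • v‖ = ‖v‖ ^ (α - 1) := by
  rw [norm_smul, Real.norm_of_nonneg (by positivity), rpow_sub_two_mul_self hv]

/-- Size of the `η`-gradient in terms of `|ξ - η|`, and the angle it makes with `ξ`; the constant
`q = 256^(-(α-1))` is the ratio bound for `|η|^(α-1)` against `|ξ - η|^(α-1)`. -/
lemma gradEtaPhase_bounds {α : ℝ} (hα : α ∈ Set.Ioo (1 : ℝ) 2) {ξ η : R3} (hz : 0 < ‖η‖)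
    (hx : 0 < ‖ξ‖) (hzy : 256 * ‖η‖ ≤ ‖ξ - η‖) :
    α * (1 - ((256 : ℝ) ^ (α - 1))⁻¹) * ‖ξ - η‖ ^ (α - 1) ≤ ‖gradEtaPhase α ξ η‖ ∧
      ‖gradEtaPhase α ξ η‖ ≤ 2 * α * ‖ξ - η‖ ^ (α - 1) ∧
      (1 - ((256 : ℝ) ^ (α - 1))⁻¹) / 8 * ‖gradEtaPhase α ξ η‖ ≤
        |(⟪‖ξ‖⁻¹ • ξ, gradEtaPhase α ξ η⟫ : ℝ)| := by
  obtain ⟨h1, h2⟩ := hα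
  have hy : 0 < ‖ξ - η‖ := by linarith
  have hin := le_inner_add (α := α) hy hz
  have hxn : ‖ξ‖ ≤ ‖ξ - η‖ + ‖η‖ := by simpa using norm_add_le (ξ - η) η
  rw [sub_add_cancel] at hin
  have e : gradEtaPhase α ξ η
      = α • (‖η‖ ^ (α - 2) • η + ‖ξ - η‖ ^ (α - 2) • (ξ - η)) := by
    unfold gradEtaPhase; module
  have n1 := norm_rpow_sub_two_smul (α := α) hz
  have n2 := norm_rpow_sub_two_smul (α := α) hy
  have hq1 : ((256 : ℝ) ^ (α - 1))⁻¹ < 1 :=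
    inv_lt_one_of_one_lt₀ (Real.one_lt_rpow (by norm_num) (by linarith))
  have hZ : ‖η‖ ^ (α - 1) ≤ ((256 : ℝ) ^ (α - 1))⁻¹ * ‖ξ - η‖ ^ (α - 1) := by
    have h := Real.rpow_le_rpow (by positivity) hzy (z := α - 1) (by linarith)
    rw [Real.mul_rpow (by norm_num) hz.le] at h
    rwa [le_inv_mul_iff₀ (by positivity)]
  set q := ((256 : ℝ) ^ (α - 1))⁻¹
  have hS := Real.rpow_pos_of_pos hy (α - 1)
  set S := ‖ξ - η‖ ^ (α - 1)
  set u := ‖η‖ ^ (α - 2) • η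
  set v := ‖ξ - η‖ ^ (α - 2) • (ξ - η)
  have up : ‖u + v‖ ≤ 2 * S := by
    have := norm_add_le u v
    nlinarith
  have lo : (1 - q) * S ≤ ‖u + v‖ := by
    have := norm_sub_le_norm_add v u
    rw [add_comm v u] at this
    linarith
  have ang : (1 - q) / 4 * S ≤ ‖ξ‖⁻¹ * (⟪ξ, u + v⟫ : ℝ) := by
    rw [le_inv_mul_iff₀ hx]
    calc ‖ξ‖ * ((1 - q) / 4 * S) ≤ (2 * ‖ξ - η‖) * ((1 - q) / 4 * S) := by
          have : 0 ≤ (1 - q) / 4 * S := by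
            have : 0 < 1 - q := by linarith
            positivity
          gcongr
          linarith
      _ = (‖ξ - η‖ / 2) * ((1 - q) * S) := by ring
      _ ≤ (‖ξ - η‖ - ‖η‖) * (S - ‖η‖ ^ (α - 1)) := by
          have : 0 ≤ (1 - q) * S := by nlinarith
          gcongr <;> linarith
      _ ≤ _ := hin
  have hα0 : 0 < α := by linarith
  rw [e, norm_smul, Real.norm_of_nonneg hα0.le]
  refine ⟨by nlinarith, by nlinarith, ?_⟩
  rw [real_inner_smul_left, real_inner_smul_right]
  refine le_trans ?_ (le_abs_self _)
  calc (1 - q) / 8 * (α * ‖u + v‖) ≤ (1 - q) / 8 * (α * (2 * S)) := by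
        have : 0 ≤ (1 - q) / 8 := by linarith
        gcongr
    _ = α * ((1 - q) / 4 * S) := by ring
    _ ≤ α * (‖ξ‖⁻¹ * (⟪ξ, u + v⟫ : ℝ)) := by gcongr
    _ = _ := by ring

/-- (High×low interactions.) For `α ∈ (1,2)` there are `0 < c ≤ C`,
depending only on `α`, such that for all `k, k₁, k₂ ∈ ℤ` with `k₁ ≥ k₂ + 10`, `|k₁ − k| ≤ 10`
and all `(ξ,η) ∈ Ω_{k,k₁,k₂}`:
`|∇_ξφ| ∼ 2^{(α−2)k + k₂}`, `|∇_ηφ| ∼ 2^{(α−1)k}`, and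
`|⟨ξ/|ξ|, ∇_ηφ⟩| ≥ c|∇_ηφ|`. -/
theorem stmt12 (α : ℝ) (hα : α ∈ Set.Ioo (1 : ℝ) 2) :
    ∃ c C : ℝ, 0 < c ∧ c ≤ C ∧
      ∀ k k₁ k₂ : ℤ, k₂ + 10 ≤ k₁ → |k₁ - k| ≤ 10 →
        ∀ ξ η : R3, OmegaReg k k₁ k₂ ξ η →
          (c * (2 : ℝ) ^ ((α - 2) * (k : ℝ) + (k₂ : ℝ)) ≤ ‖gradXiPhase α ξ η‖ ∧
            ‖gradXiPhase α ξ η‖ ≤ C * (2 : ℝ) ^ ((α - 2) * (k : ℝ) + (k₂ : ℝ))) ∧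
          (c * (2 : ℝ) ^ ((α - 1) * (k : ℝ)) ≤ ‖gradEtaPhase α ξ η‖ ∧
            ‖gradEtaPhase α ξ η‖ ≤ C * (2 : ℝ) ^ ((α - 1) * (k : ℝ))) ∧
          c * ‖gradEtaPhase α ξ η‖ ≤ |(⟪‖ξ‖⁻¹ • ξ, gradEtaPhase α ξ η⟫ : ℝ)| := by
  have h1 := hα.1
  have h2 := hα.2
  have hq1 : ((256 : ℝ) ^ (α - 1))⁻¹ < 1 :=
    inv_lt_one_of_one_lt₀ (Real.one_lt_rpow (by norm_num) (by linarith))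
  set q := ((256 : ℝ) ^ (α - 1))⁻¹ with hq
  refine ⟨min (α * (α - 1) / 8) ((1 - q) / 8), 8 * α, lt_min ?_ (by linarith),
    (min_le_left _ _).trans (by nlinarith), ?_⟩
  · have : 0 < α - 1 := by linarith
    positivity
  intro k k₁ k₂ hk _ ξ η hO
  obtain ⟨⟨x1, x2⟩, ⟨z1, z2⟩, hzy⟩ := hO.sizes hk
  rw [Real.rpow_add (by norm_num), two_rpow_mul_intCast, two_rpow_mul_intCast,
    Real.rpow_intCast]
  have hK : (0 : ℝ) < 2 ^ k := by positivity
  have hL : (0 : ℝ) < 2 ^ k₂ := by positivity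
  set K : ℝ := 2 ^ k
  set L : ℝ := 2 ^ k₂
  obtain ⟨g1, g2⟩ := gradXiPhase_bounds hα hK hL x1 x2 z1 z2 hzy
  obtain ⟨e1, e2, e3⟩ := gradEtaPhase_bounds hα (by linarith) (by linarith) hzy
  rw [← hq] at e1 e3
  have hyx : ‖ξ - η‖ ≤ ‖ξ‖ + ‖η‖ := norm_sub_le _ _
  have hxy : ‖ξ‖ ≤ ‖ξ - η‖ + ‖η‖ := by simpa using norm_add_le (ξ - η) η
  obtain ⟨s1, s2⟩ := rpow_sub_one_comparable (M := ‖ξ - η‖) hα hK (by linarith) (by linarith)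
  have hP := Real.rpow_pos_of_pos hK (α - 1)
  refine ⟨⟨le_trans ?_ g1, g2⟩, ⟨le_trans ?_ e1, e2.trans ?_⟩, le_trans ?_ e3⟩
  · gcongr
    exact min_le_left _ _
  · calc _ ≤ (1 - q) / 8 * K ^ (α - 1) := by
          gcongr
          exact min_le_right _ _
      _ ≤ α * (1 - q) * (K ^ (α - 1) / 4) := by
          have : 0 ≤ (1 - q) * K ^ (α - 1) := by nlinarith
          nlinarith
      _ ≤ _ := by
          have : 0 ≤ α * (1 - q) := by nlinarith
          gcongr
  · nlinarith
  · gcongr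
    exact min_le_right _ _

end
end

section
/- Let α ∈ (1,2) and λ ∈ ((α−1)/2, 1/2), and set ε := min{2λ/(α−1), 3/2 − λ} − 1. Then ε > 0, and there exists a constant C > 0, depending only on α and λ, such that for all t > 0 and all k ∈ ℤ one has 2^{−λk} · Σ_{k₁ ∈ ℤ, k₁ ≥ k−10} 2^{−2·max{k₁,0}} · min{ 2^{(3/2)k + 2λ k₁}, t^{−3/2} · 2^{(2λ − (3/2)α + 3/2) k₁} } ≤ C (1+t)^{−1−ε}. -/
/-!
Write `p = 1 + ε = min {2λ/(α-1), 3/2 - λ}`, `τ = log₂ t` and `s = τ + k + (α-1) k₁`, so that the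
second entry of the minimum is `2^{-(3/2) s}` times the first. Using the first entry for `s ≤ 0` and
the second for `s ≥ 0` gives, with `δ = 3/2 - p > 0`,
`min {…} ≤ 2^{(3/2) k + 2 λ k₁} 2^{-p s} 2^{-δ |s|}`. The choice of `p` makes the coefficients
`ν = 3/2 - p - λ` of `k` and `μ = 2 λ - p (α-1)` of `k₁` nonnegative, while `ν + μ < 2`; together with
`k ≤ k₁ + 10` this bounds the summand by `2^{10 ν} t^{-p} 2^{-δ |s|}`. The factor `2^{-δ |s|}` is
summable over `k₁` with a bound independent of the shift `τ + k` (`exists_tsum_shift_le`); it replaces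
plain interpolation, which diverges when the two entries of `p` coincide.

The first entry alone bounds the summand by a multiple of `2^{-(1/2 - λ) |k₁|}`, so the sum is also
bounded uniformly in `t`. The two bounds combine through `min {1, t^{-p}} ≤ 2^p (1+t)^{-p}`.
-/

open scoped ENNReal

noncomputable section

lemma summable_two_rpow_neg_abs {b : ℝ} (hb : 0 < b) :
    Summable fun j : ℤ => (2 : ℝ) ^ (-(b * |(j : ℝ)|)) := by
  have h : Summable fun n : ℕ => (2 : ℝ) ^ (-(b * (n : ℝ))) := by
    have h2 : (2 : ℝ) ^ (-b) < 1 := Real.rpow_lt_one_of_one_lt_of_neg one_lt_two (by linarith)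
    refine (summable_geometric_of_lt_one (by positivity) h2).congr fun n => ?_
    rw [← Real.rpow_natCast, ← Real.rpow_mul zero_le_two]
    ring_nf
  refine Summable.of_nat_of_neg ?_ ?_
  · simpa using h
  · simpa using h

/-- The sum of `2^{-δ |β j + c|}` over the integers is bounded uniformly in the shift `c`. -/
lemma exists_tsum_shift_le {δ β : ℝ} (hδ : 0 < δ) (hβ : 0 < β) :
    ∃ C : ℝ, 0 < C ∧ ∀ c : ℝ,
      ∑' j : ℤ, ENNReal.ofReal ((2 : ℝ) ^ (-(δ * |β * (j : ℝ) + c|))) ≤ ENNReal.ofReal C := by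
  have hs := summable_two_rpow_neg_abs (mul_pos hδ hβ)
  have hpos : 0 < ∑' j : ℤ, (2 : ℝ) ^ (-(δ * β * |(j : ℝ)|)) :=
    hs.tsum_pos (fun j => by positivity) 0 (by positivity)
  refine ⟨(2 : ℝ) ^ (δ * β) * ∑' j : ℤ, (2 : ℝ) ^ (-(δ * β * |(j : ℝ)|)), by positivity,
    fun c => ?_⟩
  -- Up to an error at most `β`, the shift `c` is the integer translation by `⌊c / β⌋`.
  set n : ℤ := ⌊c / β⌋ with hn
  have h1 : β * (n : ℝ) ≤ c := by
    have := Int.floor_le (c / β)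
    rw [le_div_iff₀ hβ] at this
    linarith
  have h2 : c ≤ β * (n : ℝ) + β := by
    have := (Int.lt_floor_add_one (c / β)).le
    rw [div_le_iff₀ hβ] at this
    linarith
  have hterm : ∀ j : ℤ, (2 : ℝ) ^ (-(δ * |β * (j : ℝ) + c|)) ≤
      (2 : ℝ) ^ (δ * β) * (2 : ℝ) ^ (-(δ * β * |((j + n : ℤ) : ℝ)|)) := fun j => by
    rw [← Real.rpow_add two_pos]
    refine Real.rpow_le_rpow_of_exponent_le one_le_two ?_
    have h3 : β * |((j + n : ℤ) : ℝ)| ≤ β + |β * (j : ℝ) + c| := by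
      rw [← abs_of_pos hβ, ← abs_mul, abs_of_pos hβ]
      push_cast
      rw [abs_le]
      constructor
      · linarith [neg_abs_le (β * (j : ℝ) + c)]
      · linarith [le_abs_self (β * (j : ℝ) + c)]
    nlinarith
  calc ∑' j : ℤ, ENNReal.ofReal ((2 : ℝ) ^ (-(δ * |β * (j : ℝ) + c|)))
      ≤ ∑' j : ℤ, ENNReal.ofReal ((2 : ℝ) ^ (δ * β)) *
          ENNReal.ofReal ((2 : ℝ) ^ (-(δ * β * |((j + n : ℤ) : ℝ)|))) := by
        refine ENNReal.tsum_le_tsum fun j => ?_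
        rw [← ENNReal.ofReal_mul (by positivity)]
        exact ENNReal.ofReal_le_ofReal (hterm j)
    _ = ENNReal.ofReal ((2 : ℝ) ^ (δ * β)) *
          ∑' j : ℤ, ENNReal.ofReal ((2 : ℝ) ^ (-(δ * β * |(j : ℝ)|))) := by
        rw [ENNReal.tsum_mul_left]
        congr 1
        exact (Equiv.addRight n).tsum_eq
          fun j : ℤ => ENNReal.ofReal ((2 : ℝ) ^ (-(δ * β * |(j : ℝ)|)))
    _ = _ := by
        rw [ENNReal.ofReal_mul (by positivity),
          ENNReal.ofReal_tsum_of_nonneg (fun j => by positivity) hs]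

/-- A termwise bound by `D` times a function `G` on `{j ≥ m}` bounds the sum over `{j ≥ m}` by `D`
times any bound for the sum of `G` over all integers. -/
lemma mul_tsum_subtype_le {A D C : ℝ} (hA : 0 ≤ A) (hD : 0 ≤ D) {m : ℤ} {F G : ℤ → ℝ}
    (hG : ∑' j : ℤ, ENNReal.ofReal (G j) ≤ ENNReal.ofReal C)
    (hF : ∀ j : ℤ, m ≤ j → A * F j ≤ D * G j) :
    ENNReal.ofReal A * ∑' j : {j : ℤ // m ≤ j}, ENNReal.ofReal (F j) ≤ ENNReal.ofReal (D * C) := by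
  rw [← ENNReal.tsum_mul_left, ENNReal.ofReal_mul hD]
  calc ∑' j : {j : ℤ // m ≤ j}, ENNReal.ofReal A * ENNReal.ofReal (F j)
      ≤ ∑' j : {j : ℤ // m ≤ j}, ENNReal.ofReal D * ENNReal.ofReal (G j) := by
        refine ENNReal.tsum_le_tsum fun j => ?_
        rw [← ENNReal.ofReal_mul hA, ← ENNReal.ofReal_mul hD]
        exact ENNReal.ofReal_le_ofReal (hF j j.2)
    _ ≤ ENNReal.ofReal D * ∑' j : ℤ, ENNReal.ofReal (G j) := by
        rw [ENNReal.tsum_mul_left]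
        gcongr
        exact ENNReal.tsum_comp_le_tsum_of_injective Subtype.val_injective
          fun j : ℤ => ENNReal.ofReal (G j)
    _ ≤ _ := by gcongr

/-- The `t`-independent exponent bound, using the first entry of the minimum. -/
lemma exponent_le_of_small {lam k j w : ℝ} (h0 : 0 < lam) (h1 : lam < 1 / 2) (hkj : k - 10 ≤ j)
    (hw0 : 0 ≤ w) (hwj : j ≤ w) (hw : w = 0 ∨ w = j) :
    -lam * k + (-2 * w + (3 / 2 * k + 2 * lam * j)) ≤ 15 + -((1 / 2 - lam) * |1 * j + 0|) := by
  have h2 : (3 / 2 - lam) * k ≤ (3 / 2 - lam) * (j + 10) :=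
    mul_le_mul_of_nonneg_left (by linarith) (by linarith)
  rw [one_mul, add_zero]
  rcases hw with rfl | rfl
  · rw [abs_of_nonpos hwj]
    nlinarith
  · rw [abs_of_nonneg hw0]
    nlinarith

/-- The exponent bound that yields the decay `t^{-p}`: `e` is the exponent of an entry of the minimum
minus that of the first entry, and `s = τ + k + β j` with `τ = log₂ t`, `β = α - 1`. -/
lemma exponent_le_of_large {lam β p k j w τ e : ℝ} (hp : 1 < p) (hpl : p ≤ 3 / 2 - lam)
    (hpβ : p * β ≤ 2 * lam) (hβ : 0 < β) (hkj : k - 10 ≤ j)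
    (hw0 : 0 ≤ w) (hwj : j ≤ w) (hw : w = 0 ∨ w = j)
    (he : e ≤ -p * (τ + k + β * j) - (3 / 2 - p) * |τ + k + β * j|) :
    -lam * k + (-2 * w + (3 / 2 * k + 2 * lam * j + e)) ≤
      10 + -p * τ + -((3 / 2 - p) * |β * j + (τ + k)|) := by
  rw [show β * j + (τ + k) = τ + k + β * j by ring]
  have h2 : (3 / 2 - p - lam) * k ≤ (3 / 2 - p - lam) * (j + 10) :=
    mul_le_mul_of_nonneg_left (by linarith) (by linarith)
  have hpβ' : 0 < p * β := by positivity
  -- `ν + μ` lies in `[0, 2]`, so the weight `-2 w` absorbs `(ν + μ) j`.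
  have h3 : (3 / 2 - p - lam + (2 * lam - p * β)) * j ≤ 2 * w := by
    rcases hw with rfl | rfl
    · nlinarith
    · nlinarith
  nlinarith

/-- Let `α ∈ (1,2)`, `λ ∈ ((α−1)/2, 1/2)` and
`ε = min{2λ/(α−1), 3/2 − λ} − 1`.  Then `ε > 0` and there is `C > 0`, depending only
on `α, λ`, such that for all `t > 0` and `k ∈ ℤ`,
`2^{−λk} Σ_{k₁ ≥ k−10} 2^{−2k₁₊} min{2^{(3/2)k+2λk₁}, t^{−3/2} 2^{(2λ−(3/2)α+3/2)k₁}}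
  ≤ C (1+t)^{−1−ε}`. -/
theorem stmt13 (α lam : ℝ) (hα : α ∈ Set.Ioo (1 : ℝ) 2)
    (hlam : lam ∈ Set.Ioo ((α - 1) / 2) (1 / 2 : ℝ)) :
    0 < min (2 * lam / (α - 1)) (3 / 2 - lam) - 1 ∧
      ∃ C : ℝ, 0 < C ∧ ∀ t : ℝ, 0 < t → ∀ k : ℤ,
        ENNReal.ofReal ((2 : ℝ) ^ (-lam * (k : ℝ))) *
            ∑' k₁ : {m : ℤ // k - 10 ≤ m},
              ENNReal.ofReal ((2 : ℝ) ^ (-(2 : ℝ) * (max (k₁ : ℤ) 0 : ℤ)) *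
                min ((2 : ℝ) ^ ((3 / 2 : ℝ) * (k : ℝ) + 2 * lam * ((k₁ : ℤ) : ℝ)))
                  (t ^ (-(3 : ℝ) / 2) *
                    (2 : ℝ) ^ ((2 * lam - (3 / 2) * α + 3 / 2) * ((k₁ : ℤ) : ℝ)))) ≤
          ENNReal.ofReal
            (C * (1 + t) ^ (-1 - (min (2 * lam / (α - 1)) (3 / 2 - lam) - 1))) := by
  obtain ⟨hα1, hα2⟩ := hα
  obtain ⟨hl1, hl2⟩ := hlam
  have hβ : 0 < α - 1 := by linarith
  have h0 : 0 < lam := by linarith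
  set p := min (2 * lam / (α - 1)) (3 / 2 - lam) with hpdef
  have hp : 1 < p := by
    rw [hpdef, lt_min_iff]
    refine ⟨?_, by linarith⟩
    rw [lt_div_iff₀ hβ]
    linarith
  have hpl : p ≤ 3 / 2 - lam := min_le_right _ _
  have hpβ : p * (α - 1) ≤ 2 * lam := by
    have : p ≤ 2 * lam / (α - 1) := min_le_left _ _
    rwa [le_div_iff₀ hβ] at this
  refine ⟨by linarith, ?_⟩
  obtain ⟨C₁, hC₁, hb₁⟩ := exists_tsum_shift_le (δ := 1 / 2 - lam) (β := 1)
    (by linarith) one_pos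
  obtain ⟨C₂, hC₂, hb₂⟩ := exists_tsum_shift_le (δ := 3 / 2 - p) (β := α - 1)
    (by linarith) hβ
  refine ⟨(2 : ℝ) ^ p * ((2 : ℝ) ^ (15 : ℝ) * C₁ + (2 : ℝ) ^ (10 : ℝ) * C₂), by positivity,
    fun t ht k => ?_⟩
  have hexp : (-1 - (p - 1)) = -p := by ring
  rw [hexp]
  have hmax : ∀ j : ℤ, (0 : ℝ) ≤ ((max j 0 : ℤ) : ℝ) ∧ (j : ℝ) ≤ ((max j 0 : ℤ) : ℝ) ∧
      (((max j 0 : ℤ) : ℝ) = 0 ∨ ((max j 0 : ℤ) : ℝ) = j) := fun j => by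
    refine ⟨by exact_mod_cast le_max_right j 0, by exact_mod_cast le_max_left j 0, ?_⟩
    rcases max_choice j 0 with h | h
    · right
      rw [h]
    · left
      rw [h, Int.cast_zero]
  rcases le_total t 1 with ht1 | ht1
  · refine (mul_tsum_subtype_le (D := (2 : ℝ) ^ (15 : ℝ)) (by positivity) (by positivity)
      (F := fun j : ℤ => (2 : ℝ) ^ (-(2 : ℝ) * (max j 0 : ℤ)) *
        min ((2 : ℝ) ^ ((3 / 2 : ℝ) * (k : ℝ) + 2 * lam * (j : ℝ)))
          (t ^ (-(3 : ℝ) / 2) * (2 : ℝ) ^ ((2 * lam - (3 / 2) * α + 3 / 2) * (j : ℝ))))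
      (hb₁ 0) ?_).trans (ENNReal.ofReal_le_ofReal ?_)
    · intro j hj
      have hkj : (k : ℝ) - 10 ≤ j := by exact_mod_cast hj
      obtain ⟨hw0, hwj, hw⟩ := hmax j
      refine (mul_le_mul_of_nonneg_left (mul_le_mul_of_nonneg_left (min_le_left _ _)
        (by positivity)) (by positivity)).trans ?_
      rw [← Real.rpow_add two_pos, ← Real.rpow_add two_pos, ← Real.rpow_add two_pos]
      exact Real.rpow_le_rpow_of_exponent_le one_le_two
        (exponent_le_of_small h0 hl2 hkj hw0 hwj hw)
    · have h1 : 1 ≤ (2 : ℝ) ^ p * (1 + t) ^ (-p) := by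
        rw [Real.rpow_neg (by linarith), ← div_eq_mul_inv, one_le_div (by positivity)]
        exact Real.rpow_le_rpow (by linarith) (by linarith) (by linarith)
      calc (2 : ℝ) ^ (15 : ℝ) * C₁
          ≤ (2 : ℝ) ^ (15 : ℝ) * C₁ + (2 : ℝ) ^ (10 : ℝ) * C₂ := by
            have : 0 < (2 : ℝ) ^ (10 : ℝ) * C₂ := by positivity
            linarith
        _ ≤ ((2 : ℝ) ^ (15 : ℝ) * C₁ + (2 : ℝ) ^ (10 : ℝ) * C₂) *
              ((2 : ℝ) ^ p * (1 + t) ^ (-p)) := le_mul_of_one_le_right (by positivity) h1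
        _ = _ := by ring
  · set τ := Real.logb 2 t with hτdef
    have hτ : t = (2 : ℝ) ^ τ := (Real.rpow_logb two_pos (by norm_num) ht).symm
    have htp : ∀ x : ℝ, t ^ x = (2 : ℝ) ^ (τ * x) := fun x => by
      rw [Real.rpow_mul zero_le_two, ← hτ]
    refine (mul_tsum_subtype_le (D := (2 : ℝ) ^ (10 + -p * τ)) (by positivity) (by positivity)
      (F := fun j : ℤ => (2 : ℝ) ^ (-(2 : ℝ) * (max j 0 : ℤ)) *
        min ((2 : ℝ) ^ ((3 / 2 : ℝ) * (k : ℝ) + 2 * lam * (j : ℝ)))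
          (t ^ (-(3 : ℝ) / 2) * (2 : ℝ) ^ ((2 * lam - (3 / 2) * α + 3 / 2) * (j : ℝ))))
      (hb₂ (τ + k)) ?_).trans (ENNReal.ofReal_le_ofReal ?_)
    · intro j hj
      have hkj : (k : ℝ) - 10 ≤ j := by exact_mod_cast hj
      obtain ⟨hw0, hwj, hw⟩ := hmax j
      -- The first entry is the smaller one for `s ≤ 0`, the second for `s ≥ 0`.
      obtain ⟨e, he, hmin⟩ : ∃ e : ℝ,
          e ≤ -p * (τ + k + (α - 1) * j) - (3 / 2 - p) * |τ + k + (α - 1) * j| ∧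
          min ((2 : ℝ) ^ ((3 / 2 : ℝ) * (k : ℝ) + 2 * lam * (j : ℝ)))
            (t ^ (-(3 : ℝ) / 2) * (2 : ℝ) ^ ((2 * lam - (3 / 2) * α + 3 / 2) * (j : ℝ))) ≤
          (2 : ℝ) ^ ((3 / 2 : ℝ) * (k : ℝ) + 2 * lam * (j : ℝ) + e) := by
        rcases le_total (τ + k + (α - 1) * j) 0 with hs | hs
        · refine ⟨0, ?_, (min_le_left _ _).trans_eq (by rw [add_zero])⟩
          rw [abs_of_nonpos hs]
          nlinarith
        · refine ⟨-(3 / 2) * (τ + k + (α - 1) * j), ?_, (min_le_right _ _).trans_eq ?_⟩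
          · rw [abs_of_nonneg hs]
            linarith
          · rw [htp, ← Real.rpow_add two_pos]
            congr 1
            ring
      refine (mul_le_mul_of_nonneg_left (mul_le_mul_of_nonneg_left hmin
        (by positivity)) (by positivity)).trans ?_
      rw [← Real.rpow_add two_pos, ← Real.rpow_add two_pos, ← Real.rpow_add two_pos]
      exact Real.rpow_le_rpow_of_exponent_le one_le_two
        (exponent_le_of_large hp hpl hpβ hβ hkj hw0 hwj hw he)
    · have h1 : (2 : ℝ) ^ (-p * τ) ≤ (2 : ℝ) ^ p * (1 + t) ^ (-p) := by
        rw [mul_comm (-p) τ, ← htp, Real.rpow_neg ht.le, Real.rpow_neg (by linarith),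
          ← div_eq_mul_inv, inv_eq_one_div, div_le_div_iff₀ (by positivity) (by positivity),
          one_mul, ← Real.mul_rpow zero_le_two ht.le]
        exact Real.rpow_le_rpow (by linarith) (by linarith) (by linarith)
      rw [Real.rpow_add two_pos]
      calc (2 : ℝ) ^ (10 : ℝ) * (2 : ℝ) ^ (-p * τ) * C₂
          = (2 : ℝ) ^ (10 : ℝ) * C₂ * (2 : ℝ) ^ (-p * τ) := by ring
        _ ≤ ((2 : ℝ) ^ (15 : ℝ) * C₁ + (2 : ℝ) ^ (10 : ℝ) * C₂) *
              ((2 : ℝ) ^ p * (1 + t) ^ (-p)) := by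
            gcongr
            have : 0 < (2 : ℝ) ^ (15 : ℝ) * C₁ := by positivity
            linarith
        _ = _ := by ring

end
end
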